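/- Every countable model M of ZF has 2^{ℵ₀} pairwise non-isomorphic end elementary extensions. -/

import Mathlib

open FirstOrder Cardinal

/-- The language of set theory with one binary relation symbol (membership)
and one unary predicate symbol (for a distinguished subset). -/
def LSP : FirstOrder.Language where
  Functions := fun _ => Empty
  Relations := fun n =>
    match n with
    | 1 => Unit
    | 2 => Unit
    | _ => Empty

/-- A model of the language of set theory: a carrier together with a
membership relation and the interpretation of the distinguished predicate. -/
structure SetModel : Type 2 where
  Carrier : Type 1
  mem : Carrier → Carrier → Prop
  pred : Carrier → Prop

/-- The first-order `LSP`-structure attached to a `SetModel`. -/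
def SetModel.str (M : SetModel) : LSP.Structure M.Carrier where
  funMap := fun {_} f _ => Empty.elim f
  RelMap := fun {n} =>
    match n with
    | 1 => fun _ v => M.pred (v 0)
    | 2 => fun _ v => M.mem (v 0) (v 1)
    | 0 => fun r _ => Empty.elim r
    | (_ + 3) => fun r _ => Empty.elim r

/-- Satisfaction of a first-order formula with `n` free variables in a `SetModel`. -/
def SetModel.Realize (M : SetModel) {n : ℕ} (φ : LSP.Formula (Fin n))
    (v : Fin n → M.Carrier) : Prop :=
  letI := M.str
  φ.Realize v

/-- `f : M → N` is an elementary map. -/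
def IsElem (M N : SetModel) (f : M.Carrier → N.Carrier) : Prop :=
  ∀ (n : ℕ) (φ : LSP.Formula (Fin n)) (v : Fin n → M.Carrier),
    N.Realize φ (f ∘ v) ↔ M.Realize φ v

/-- `f : M → N` realizes `N` as a (proper) end elementary extension of `M`:
it is elementary, no element of `M` gains new members in `N`, and `N` properly
extends the image of `M`. -/
structure IsEEE (M N : SetModel) (f : M.Carrier → N.Carrier) : Prop where
  elementary : IsElem M N f
  isEnd : ∀ (a : M.Carrier) (b : N.Carrier), N.mem b (f a) → ∃ b', f b' = b
  proper : ¬ Function.Surjective f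

/-- `N` is a (proper) end elementary extension of `M`. -/
def EEE (M N : SetModel) : Prop := ∃ f, IsEEE M N f

/-- Isomorphism of set models. -/
def SMIso (M N : SetModel) : Prop :=
  ∃ e : M.Carrier ≃ N.Carrier,
    (∀ x y, M.mem x y ↔ N.mem (e x) (e y)) ∧ ∀ x, M.pred x ↔ N.pred (e x)

/-- The model `(A, ∈, S)` where `A, S` are collections of ZFC sets and `∈` is
genuine membership. -/
def ZModel (A S : Set ZFSet) : SetModel :=
  ⟨A, fun x y => (x : ZFSet) ∈ (y : ZFSet), fun x => (x : ZFSet) ∈ S⟩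

/-- `(A,∈,SA) ≺ₑ (B,∈,SB)`: the inclusion map is a proper end elementary
extension of concrete (well-founded) models. -/
def ZEEE (A SA B SB : Set ZFSet) : Prop :=
  ∃ h : A ⊆ B, IsEEE (ZModel A SA) (ZModel B SB) (Set.inclusion h)

/-- `R(o) = V_o`: the collection of ZFC sets of rank `< o`. -/
def Vrank (o : Ordinal.{0}) : Set ZFSet := {x | x.rank < o}

/-- Semantic satisfaction of the axioms of ZF⁻ (ZF without power set), with the
separation and replacement schemas ranging over all first-order formulas of the
language. -/
structure SatZFminus (M : SetModel) : Prop where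
  ext : ∀ x y, (∀ z, M.mem z x ↔ M.mem z y) → x = y
  found : ∀ x, (∃ y, M.mem y x) → ∃ y, M.mem y x ∧ ∀ z, M.mem z x → ¬M.mem z y
  pair : ∀ x y, ∃ p, ∀ z, M.mem z p ↔ z = x ∨ z = y
  unionAx : ∀ x, ∃ u, ∀ z, M.mem z u ↔ ∃ y, M.mem y x ∧ M.mem z y
  infinity : ∃ i, (∃ e, M.mem e i ∧ ∀ z, ¬M.mem z e) ∧
    ∀ x, M.mem x i → ∃ s, M.mem s i ∧ ∀ z, M.mem z s ↔ M.mem z x ∨ z = x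
  sep : ∀ (n : ℕ) (φ : LSP.Formula (Fin (n + 1))) (p : Fin n → M.Carrier) (a : M.Carrier),
    ∃ b, ∀ z, M.mem z b ↔ M.mem z a ∧ M.Realize φ (Fin.cons z p)
  repl : ∀ (n : ℕ) (φ : LSP.Formula (Fin (n + 2))) (p : Fin n → M.Carrier) (a : M.Carrier),
    (∀ x, M.mem x a → ∃! y, M.Realize φ (Fin.cons x (Fin.cons y p))) →
    ∃ b, ∀ y, M.mem y b ↔ ∃ x, M.mem x a ∧ M.Realize φ (Fin.cons x (Fin.cons y p))

/-- Semantic satisfaction of the ZF axioms. -/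
structure SatZF (M : SetModel) extends SatZFminus M : Prop where
  power : ∀ x, ∃ p, ∀ z, M.mem z p ↔ ∀ w, M.mem w z → M.mem w x

/-- Semantic satisfaction of the ZFC axioms. -/
structure SatZFC (M : SetModel) extends SatZF M : Prop where
  choice : ∀ x, (∀ y, M.mem y x → ∃ z, M.mem z y) →
    (∀ y y', M.mem y x → M.mem y' x → y ≠ y' → ¬∃ z, M.mem z y ∧ M.mem z y') →
    ∃ c, ∀ y, M.mem y x → ∃! z, M.mem z y ∧ M.mem z c

/-!
This is a forcing argument whose conditions are the classes of assignments `ℕ → M`, definable with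
parameters, for which the values of the variable `0` form a proper class. An ultrafilter containing
conditions from countably many coinitial sets makes the germs of the coordinate functions
`v ↦ v k` an elementary submodel of the ultrapower of `M`, because every existential statement which
it forces has a witness named by a variable. By replacement, a variable bounded by an element of
`M` can be decided to be constant, so this submodel is an end extension of `M`; it is proper since
the variable `0` can be decided to avoid any given element of `M`.

Every condition can be split by a class which is definable without parameters. Suppose that the
condition is given by a formula with parameters. The values of the variable `0`, over all choices of
parameters, define without parameters a binary relation, and one climbs the hierarchy through levels
reflecting it. The class separates the elements according to whether they first appear just after a
limit of such levels. Splitting along a binary tree gives `2^ℵ₀` extensions in which the variable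
`0` names elements of pairwise different types. A countable model realizes only countably many
types, so only countably many of these extensions are isomorphic to any given one.
-/

open FirstOrder.Language Set Filter

section Definability

variable {L : FirstOrder.Language} {M : Type*} [L.Structure M] {A : Set M} {ι κ : Type*}

/-- A function of an assignment is a term over `A` if it is a variable or a parameter from `A`. -/
class IsTerm (A : Set M) (t : (ι → M) → M) : Prop where
  eq_var_or_const : (∃ i, t = fun v => v i) ∨ ∃ a ∈ A, t = fun _ => a

instance IsTerm.var (i : ι) : IsTerm A fun v : ι → M => v i :=
  ⟨.inl ⟨i, rfl⟩⟩

instance IsTerm.const (a : M) : IsTerm univ fun _ : ι → M => a :=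
  ⟨.inr ⟨a, mem_univ a, rfl⟩⟩

variable (L) in
/-- A property of assignments `ι → M` is definable if it is expressed by an `L`-formula with
parameters from `A`. This is a class so that definability is found by instance search, following
the way in which a property is written. -/
class IsDefinable (A : Set M) (P : (ι → M) → Prop) : Prop where
  definable : A.Definable L {v | P v}

theorem isDefinable_iff_exists_formula {P : (ι → M) → Prop} :
    IsDefinable L A P ↔ ∃ φ : L.Formula (A ⊕ ι), ∀ v, P v ↔ φ.Realize (Sum.elim (↑) v) := by
  have : IsDefinable L A P ↔ A.Definable L {v | P v} := ⟨fun h => h.definable, fun h => ⟨h⟩⟩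
  simp only [this, definable_iff_exists_formula_sum, Set.ext_iff, mem_ofPred_eq]

variable (L A) in
/-- Definability of a unary predicate on `M` with parameters from `A`. -/
abbrev IsDefinablePred (P : M → Prop) : Prop :=
  IsDefinable L A fun v : Fin 1 → M => P (v 0)

variable (L A) in
/-- Definability of a binary relation on `M` with parameters from `A`. -/
abbrev IsDefinableRel (R : M → M → Prop) : Prop :=
  IsDefinable L A fun v : Fin 2 → M => R (v 0) (v 1)

variable (L A) in
/-- Definability of a ternary relation on `M` with parameters from `A`. -/
abbrev IsDefinableRel₃ (R : M → M → M → Prop) : Prop :=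
  IsDefinable L A fun v : Fin 3 → M => R (v 0) (v 1) (v 2)

namespace IsDefinable

variable {P Q : (ι → M) → Prop}

theorem subst (hP : IsDefinable L A P) (t : ι → (κ → M) → M) [ht : ∀ i, IsTerm A (t i)] :
    IsDefinable L A fun v => P fun i => t i v := by
  obtain ⟨φ, hφ⟩ := isDefinable_iff_exists_formula.1 hP
  have hvar (i : ι) : ∃ j : A ⊕ κ, ∀ v : κ → M, Sum.elim (↑) v j = t i v := by
    obtain ⟨j, hj⟩ | ⟨a, ha, hj⟩ := (ht i).eq_var_or_const
    exacts [⟨.inr j, by simp [hj]⟩, ⟨.inl ⟨a, ha⟩, by simp [hj]⟩]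
  choose σ hσ using hvar
  refine isDefinable_iff_exists_formula.2 ⟨φ.relabel (Sum.elim Sum.inl σ), fun v => ?_⟩
  rw [hφ, Formula.realize_relabel]
  exact iff_of_eq (congrArg _ (funext fun i => i.casesOn (fun _ => rfl) fun i => (hσ i v).symm))

theorem weaken (hP : IsDefinable L ∅ P) : IsDefinable L A P :=
  ⟨hP.definable.mono (empty_subset A)⟩

instance (p : Prop) : IsDefinable L A fun _ : ι → M => p := by
  by_cases hp : p
  exacts [⟨by simp [hp]⟩, ⟨by simp [hp]⟩]

instance and [hP : IsDefinable L A P] [hQ : IsDefinable L A Q] :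
    IsDefinable L A fun v => P v ∧ Q v :=
  ⟨hP.definable.inter hQ.definable⟩

instance or [hP : IsDefinable L A P] [hQ : IsDefinable L A Q] :
    IsDefinable L A fun v => P v ∨ Q v :=
  ⟨hP.definable.union hQ.definable⟩

instance imp [hP : IsDefinable L A P] [hQ : IsDefinable L A Q] :
    IsDefinable L A fun v => P v → Q v :=
  ⟨hP.definable.himp hQ.definable⟩

instance iff [IsDefinable L A P] [IsDefinable L A Q] : IsDefinable L A fun v => P v ↔ Q v := by
  simp only [iff_def]
  infer_instance

instance existsFinite [Finite κ] {P : (ι → M) → (κ → M) → Prop}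
    [hP : IsDefinable L A fun v : ι ⊕ κ → M => P (fun i => v (.inl i)) fun j => v (.inr j)] :
    IsDefinable L A fun v => ∃ u, P v u :=
  ⟨hP.definable.exists_of_finite⟩

instance exists' {P : (ι → M) → M → Prop}
    [hP : IsDefinable L A fun v : Option ι → M => P (fun i => v (some i)) (v none)] :
    IsDefinable L A fun v => ∃ x, P v x := by
  have hu (v : ι → M) : (∃ x, P v x) ↔ ∃ u : Unit → M, P v (u ()) :=
    ⟨fun ⟨x, hx⟩ => ⟨fun _ => x, hx⟩, fun ⟨u, hu⟩ => ⟨u (), hu⟩⟩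
  simp only [hu]
  have : IsDefinable L A fun v : ι ⊕ Unit → M => P (fun i => v (.inl i)) (v (.inr ())) :=
    hP.subst fun i v => v (i.elim (Sum.inr ()) Sum.inl)
  exact existsFinite (hP := this)

instance forall' {P : (ι → M) → M → Prop}
    [hP : IsDefinable L A fun v : Option ι → M => P (fun i => v (some i)) (v none)] :
    IsDefinable L A fun v => ∀ x, P v x := by
  have : IsDefinable L A fun v => ¬∃ x, ¬P v x := inferInstance
  simpa only [not_exists_not] using this

theorem forall_finite [Finite κ] {P : κ → (ι → M) → Prop} (hP : ∀ j, IsDefinable L A (P j)) :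
    IsDefinable L A fun v => ∀ j, P j v := by
  have := definable_iInter_of_finite fun j => (hP j).definable
  exact ⟨by simpa only [iInter_ofPred] using this⟩

instance (priority := low) pred {P : M → Prop} [hP : IsDefinablePred L A P]
    {t : (ι → M) → M} [IsTerm A t] : IsDefinable L A fun v => P (t v) :=
  hP.subst fun _ => t

instance (priority := low) rel {R : M → M → Prop} [hR : IsDefinableRel L A R]
    {s t : (ι → M) → M} [hs : IsTerm A s] [ht : IsTerm A t] :
    IsDefinable L A fun v => R (s v) (t v) :=
  hR.subst (ht := Fin.forall_fin_two.2 ⟨hs, ht⟩) ![s, t]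

instance (priority := low) rel₃ {R : M → M → M → Prop} [hR : IsDefinableRel₃ L A R]
    {r s t : (ι → M) → M} [hr : IsTerm A r] [hs : IsTerm A s] [ht : IsTerm A t] :
    IsDefinable L A fun v => R (r v) (s v) (t v) :=
  hR.subst (ht := by simp [Fin.forall_fin_succ, hr, hs, ht]) ![r, s, t]

instance eq : IsDefinableRel L A (Eq (α := M)) :=
  ⟨Definable.diagonal L A⟩

theorem insert_variable {P : (ι → M) → M → Prop}
    (hP : IsDefinable L A fun v : Option ι → M => P (fun i => v (some i)) (v none)) :
    IsDefinable L A fun v : Option (Option ι) → M => P (fun i => v (some (some i))) (v none) :=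
  hP.subst fun i v => v (i.elim none fun j => some (some j))

theorem exists_finite_support (hP : IsDefinable L A P) :
    ∃ (s : Finset ι) (Q : (s → M) → Prop), IsDefinable L A Q ∧ ∀ v, P v ↔ Q fun i => v i := by
  classical
  obtain ⟨φ, hφ⟩ := isDefinable_iff_exists_formula.1 hP
  let s := φ.freeVarFinset.toRight
  have hs {i : ι} (hi : .inr i ∈ φ.freeVarFinset) : i ∈ s := Finset.mem_toRight.2 hi
  let f (x : φ.freeVarFinset) : A ⊕ s :=
    match x with
    | ⟨.inl a, _⟩ => .inl a
    | ⟨.inr i, hi⟩ => .inr ⟨i, hs hi⟩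
  let ψ : L.Formula (A ⊕ s) := φ.restrictFreeVar f
  refine ⟨s, fun u => ψ.Realize (Sum.elim (↑) u),
    isDefinable_iff_exists_formula.2 ⟨ψ, fun _ => .rfl⟩, fun v => (hφ v).trans ?_⟩
  refine (BoundedFormula.realize_restrictFreeVar _ ?_).symm
  rintro ⟨_ | _, _⟩ <;> rfl

theorem image_comp [Nonempty M] (hP : IsDefinable L A P) [Finite κ] (f : κ → ι) :
    IsDefinable L A fun w : κ → M => ∃ v, P v ∧ ∀ j, v (f j) = w j := by
  classical
  have := Fintype.ofFinite κ
  obtain ⟨s, Q, hQ, hPQ⟩ := exists_finite_support hP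
  let t := s ∪ Finset.univ.image f
  have hst (i : s) : (i : ι) ∈ t := Finset.mem_union_left _ i.2
  have hft (j : κ) : f j ∈ t := by simp [t]
  have hQ' := hQ.subst (κ := κ ⊕ t) fun i w => w (.inr ⟨i, hst i⟩)
  have hf : IsDefinable L A fun w : κ ⊕ t → M => ∀ j, w (.inr ⟨f j, hft j⟩) = w (.inl j) :=
    forall_finite fun _ => inferInstance
  have : IsDefinable L A fun w : κ → M =>
      ∃ u : t → M, (Q fun i => u ⟨i, hst i⟩) ∧ ∀ j, u ⟨f j, hft j⟩ = w j :=
    inferInstance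
  convert! this using 3 with w
  constructor
  · rintro ⟨v, hv, hvw⟩
    exact ⟨fun i => v i, (hPQ v).1 hv, hvw⟩
  · rintro ⟨u, hu, huw⟩
    obtain ⟨v, rfl⟩ := (Subtype.coe_injective (p := (· ∈ t))).surjective_comp_right (γ := M) u
    exact ⟨v, (hPQ v).2 hu, huw⟩

theorem exists_forall_update_iff [DecidableEq ι] (hP : IsDefinable L A P) :
    ∃ s : Finset ι, ∀ i ∉ s, ∀ v x, P (Function.update v i x) ↔ P v := by
  obtain ⟨s, Q, -, hPQ⟩ := exists_finite_support hP
  refine ⟨s, fun i hi v x => (hPQ _).trans (Iff.trans (iff_of_eq (congrArg Q ?_)) (hPQ v).symm)⟩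
  exact funext fun j => Function.update_of_ne (ne_of_mem_of_not_mem j.2 hi) _ _

theorem image_eval [Nonempty M] (hP : IsDefinable L A P) (i : ι) :
    IsDefinablePred L A fun x => ∃ v, P v ∧ v i = x := by
  simpa only [Fin.forall_fin_one] using hP.image_comp fun _ : Fin 1 => i

theorem image_eval₂ [Nonempty M] (hP : IsDefinable L A P) (i j : ι) :
    IsDefinableRel L A fun x y => ∃ v, P v ∧ v i = x ∧ v j = y := by
  simpa [IsDefinableRel, Fin.forall_fin_two] using hP.image_comp ![i, j]

theorem realize (φ : L.Formula ι) : IsDefinable L A (φ.Realize (M := M)) :=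
  weaken ⟨empty_definable_iff.2 ⟨φ, rfl⟩⟩

theorem exists_formula_empty (hP : IsDefinable L ∅ P) : ∃ φ : L.Formula ι, ∀ v, P v ↔ φ.Realize v :=
  (empty_definable_iff.1 hP.definable).imp fun _ hφ => Set.ext_iff.1 hφ

theorem exists_formula_parameters (hP : IsDefinable L A P) :
    ∃ (n : ℕ) (p : Fin n → M) (φ : L.Formula (ι ⊕ Fin n)), ∀ v, P v ↔ φ.Realize (Sum.elim v p) := by
  obtain ⟨B, -, hB⟩ := definable_iff_finitely_definable.1 hP.definable
  obtain ⟨φ, hφ⟩ := isDefinable_iff_exists_formula.1 ⟨hB⟩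
  refine ⟨B.card, fun i => (B.equivFin.symm i : M),
    φ.relabel (Sum.elim (fun b => .inr (B.equivFin b)) .inl), fun v => ?_⟩
  rw [hφ, Formula.realize_relabel]
  exact iff_of_eq (congrArg _ (funext fun i => i.casesOn (fun b => by simp) fun i => rfl))

instance [Countable M] [Countable ι] [Countable L.Symbols] :
    Countable {P : (ι → M) → Prop // IsDefinable L A P} := by
  choose φ hφ using fun P : {P : (ι → M) → Prop // IsDefinable L A P} =>
    isDefinable_iff_exists_formula.1 P.2
  refine Function.Injective.countable (f := φ) fun P Q hPQ => Subtype.ext (funext fun v => ?_)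
  exact propext ((hφ P v).trans (hPQ ▸ (hφ Q v).symm))

end IsDefinable
end Definability

namespace SetModel

variable {M : SetModel} {A : Set M.Carrier} {ι : Type*}

instance : CoeSort SetModel (Type 1) :=
  ⟨Carrier⟩

instance : LSP.Structure M :=
  M.str

instance : Membership M M :=
  ⟨fun y x => M.mem x y⟩

instance : HasSubset M :=
  ⟨fun x y => ∀ z ∈ x, z ∈ y⟩

/-- The binary relation symbol of `LSP`. -/
def memSymbol : LSP.Relations 2 :=
  ()

theorem relMap_memSymbol {x y : M} : Structure.RelMap memSymbol ![x, y] ↔ x ∈ y :=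
  .rfl

theorem realize_memSymbol_formula₂ {v : ι → M} {i j : ι} :
    (memSymbol.formula₂ (Term.var i) (Term.var j)).Realize v ↔ v i ∈ v j := by
  rw [Formula.realize_rel₂, ← relMap_memSymbol]
  rfl

instance isDefinableRel_mem : IsDefinableRel LSP A (Membership.mem : M → M → Prop) := by
  change IsDefinable LSP A fun v : Fin 2 → M => v 1 ∈ v 0
  simp only [← realize_memSymbol_formula₂]
  exact .realize _

/-- A class of elements of `M` is small if it is covered by an element of `M`; a class which is
not small is a proper class. -/
def IsSmall (P : M → Prop) : Prop :=
  ∃ b : M, ∀ x, P x → x ∈ b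

/-- `p` is the unordered pair `{x, y}`. -/
def IsUPair (p x y : M) : Prop :=
  ∀ z, z ∈ p ↔ z = x ∨ z = y

/-- `p` is the Kuratowski ordered pair `{{x}, {x, y}}`. -/
def IsPair (p x y : M) : Prop :=
  ∃ s t, IsUPair s x x ∧ IsUPair t x y ∧ IsUPair p s t

/-- `s` is the von Neumann successor `x ∪ {x}`. -/
def IsSucc (s x : M) : Prop :=
  ∀ z, z ∈ s ↔ z ∈ x ∨ z = x

instance {P : (ι → M) → M → Prop}
    [hP : IsDefinable LSP A fun v : Option ι → M => P (fun i => v (some i)) (v none)] :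
    IsDefinable LSP A fun v => IsSmall (P v) := by
  have := hP.insert_variable
  unfold IsSmall
  infer_instance

instance : IsDefinableRel₃ LSP A (IsUPair (M := M)) := by
  unfold IsUPair
  infer_instance

instance : IsDefinableRel₃ LSP A (IsPair (M := M)) := by
  unfold IsPair
  infer_instance

instance : IsDefinableRel LSP A (IsSucc (M := M)) := by
  unfold IsSucc
  infer_instance

theorem IsSmall.mono {P Q : M → Prop} (hQ : IsSmall Q) (hPQ : ∀ x, P x → Q x) : IsSmall P :=
  hQ.imp fun _ hb x hx => hb x (hPQ x hx)

theorem IsUPair.right_unique {p x y z : M} (hy : IsUPair p x y) (hz : IsUPair p x z) : y = z := by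
  have hyz := (hy z).1 ((hz z).2 (.inr rfl))
  have hzy := (hz y).1 ((hy y).2 (.inr rfl))
  grind

theorem IsPair.injective {p x y x' y' : M} (h : IsPair p x y) (h' : IsPair p x' y') :
    x = x' ∧ y = y' := by
  obtain ⟨s, t, hs, ht, hp⟩ := h
  obtain ⟨s', t', hs', ht', hp'⟩ := h'
  have hx : x' = x := by
    obtain rfl | rfl := (hp' s).1 ((hp s).2 (.inl rfl))
    exacts [((hs x').1 ((hs' x').2 (.inl rfl))).elim id id,
      ((hs x').1 ((ht' x').2 (.inl rfl))).elim id id]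
  subst hx
  refine ⟨rfl, ?_⟩
  have htt' := (hp' t).1 ((hp t).2 (.inr rfl))
  have ht't := (hp t').1 ((hp' t').2 (.inr rfl))
  have hy := (ht y).2 (.inr rfl)
  have hy' := (ht' y').2 (.inr rfl)
  by_cases htt : t = t'
  · exact ht.right_unique (htt ▸ ht')
  · obtain rfl := htt'.resolve_right htt
    obtain rfl := ht't.resolve_right (Ne.symm htt)
    exact (((hs' y).1 hy).elim id id).trans (((hs y').1 hy').elim id id).symm

end SetModel

open SetModel

namespace SatZFminus

variable {M : SetModel}

section Axioms

variable (hM : SatZFminus M)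
include hM

theorem ext' {x y : M} (h : ∀ z, z ∈ x ↔ z ∈ y) : x = y :=
  hM.ext x y h

theorem exists_separation (P : M → Prop) [hP : IsDefinablePred LSP univ P] (a : M) :
    ∃ b : M, ∀ z, z ∈ b ↔ z ∈ a ∧ P z := by
  obtain ⟨n, p, φ, hφ⟩ := hP.exists_formula_parameters
  obtain ⟨b, hb⟩ := hM.sep n (φ.relabel (Sum.elim (fun _ => 0) Fin.succ)) p a
  refine ⟨b, fun z => (hb z).trans (and_congr_right fun _ => Iff.trans ?_ (hφ fun _ => z).symm)⟩
  refine Formula.realize_relabel.trans (iff_of_eq (congrArg _ (funext fun i => ?_)))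
  cases i <;> rfl

theorem exists_replacement (R : M → M → Prop) [hR : IsDefinableRel LSP univ R] {a : M}
    (h : ∀ x ∈ a, ∃! y, R x y) : ∃ b : M, ∀ y, y ∈ b ↔ ∃ x ∈ a, R x y := by
  obtain ⟨n, p, φ, hφ⟩ := hR.exists_formula_parameters
  let ψ : LSP.Formula (Fin (n + 2)) := φ.relabel (Sum.elim ![0, 1] fun i => i.succ.succ)
  have hψ (x y : M) : M.Realize ψ (Fin.cons x (Fin.cons y p)) ↔ R x y := by
    refine Iff.trans ?_ (hφ ![x, y]).symm
    refine Formula.realize_relabel.trans (iff_of_eq (congrArg _ (funext fun i => ?_)))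
    rcases i with i | i
    · fin_cases i <;> rfl
    · rfl
  obtain ⟨b, hb⟩ := hM.repl n ψ p a fun x hx => by simpa only [hψ] using h x hx
  exact ⟨b, fun y => (hb y).trans (exists_congr fun x => and_congr_right fun _ => hψ x y)⟩

theorem exists_upair (x y : M) : ∃ p : M, IsUPair p x y :=
  hM.pair x y

theorem exists_sUnion (a : M) : ∃ u : M, ∀ z, z ∈ u ↔ ∃ y ∈ a, z ∈ y :=
  hM.unionAx a

theorem exists_union (x y : M) : ∃ u : M, ∀ z, z ∈ u ↔ z ∈ x ∨ z ∈ y := by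
  obtain ⟨p, hp⟩ := hM.exists_upair x y
  obtain ⟨u, hu⟩ := hM.exists_sUnion p
  exact ⟨u, fun z => by simp [hu, hp _]⟩

theorem exists_insert (x y : M) : ∃ s : M, ∀ z, z ∈ s ↔ z ∈ x ∨ z = y := by
  obtain ⟨p, hp⟩ := hM.exists_upair y y
  obtain ⟨u, hu⟩ := hM.exists_union x p
  exact ⟨u, fun z => by simp [hu, hp _]⟩

theorem exists_eq_of_isSmall (P : M → Prop) [IsDefinablePred LSP univ P] (hP : IsSmall P) :
    ∃ b : M, ∀ z, z ∈ b ↔ P z := by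
  obtain ⟨a, ha⟩ := hP
  obtain ⟨b, hb⟩ := hM.exists_separation P a
  exact ⟨b, fun z => (hb z).trans (and_iff_right_of_imp (ha z))⟩

theorem isSmall_or {P Q : M → Prop} (hP : IsSmall P) (hQ : IsSmall Q) :
    IsSmall fun x => P x ∨ Q x := by
  obtain ⟨a, ha⟩ := hP
  obtain ⟨b, hb⟩ := hQ
  obtain ⟨u, hu⟩ := hM.exists_union a b
  exact ⟨u, fun x hx => (hu x).2 (hx.imp (ha x) (hb x))⟩

theorem isSmall_exists_mem (R : M → M → Prop) [IsDefinableRel LSP univ R] {a : M}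
    (h : ∀ x ∈ a, IsSmall (R x)) : IsSmall fun y => ∃ x ∈ a, R x y := by
  have hset (x : M) (hx : x ∈ a) : ∃! b : M, ∀ y, y ∈ b ↔ R x y := by
    obtain ⟨b, hb⟩ := hM.exists_eq_of_isSmall (R x) (h x hx)
    exact ⟨b, hb, fun c hc => hM.ext' fun y => (hc y).trans (hb y).symm⟩
  obtain ⟨f, hf⟩ := hM.exists_replacement (fun x b => ∀ y, y ∈ b ↔ R x y) hset
  obtain ⟨u, hu⟩ := hM.exists_sUnion f
  refine ⟨u, fun y ⟨x, hx, hxy⟩ => ?_⟩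
  obtain ⟨b, hb, -⟩ := hset x hx
  exact (hu y).2 ⟨b, (hf b).2 ⟨x, hx, hb⟩, (hb y).2 hxy⟩

theorem isSmall_of_unique {P : M → Prop} (h : ∀ x y, P x → P y → x = y) : IsSmall P := by
  by_cases hP : ∃ x, P x
  · obtain ⟨x, hx⟩ := hP
    obtain ⟨s, hs⟩ := hM.exists_upair x x
    exact ⟨s, fun y hy => (hs y).2 (.inl (h y x hy hx))⟩
  · obtain ⟨i, -⟩ := hM.infinity
    exact ⟨i, fun x hx => (hP ⟨x, hx⟩).elim⟩

theorem exists_minimal_of_isSmall (P : M → Prop) [IsDefinablePred LSP univ P] (hP : IsSmall P)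
    (hne : ∃ x, P x) : ∃ x, P x ∧ ∀ y ∈ x, ¬P y := by
  obtain ⟨b, hb⟩ := hM.exists_eq_of_isSmall P hP
  simp only [← hb] at hne ⊢
  obtain ⟨x, hx, hmin⟩ := hM.found b hne
  exact ⟨x, hx, fun y hyx hyb => hmin y hyb hyx⟩

theorem notMem_self (x : M) : x ∉ x := fun hx => by
  obtain ⟨y, rfl, hy⟩ := hM.exists_minimal_of_isSmall (· = x) ⟨x, fun _ h => h ▸ hx⟩ ⟨x, rfl⟩
  exact hy y hx rfl

theorem notMem_of_mem {x y : M} (hxy : x ∈ y) : y ∉ x := fun hyx => by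
  obtain ⟨p, hp⟩ := hM.exists_upair x y
  obtain ⟨z, rfl | rfl, hz⟩ := hM.exists_minimal_of_isSmall (fun z => z = x ∨ z = y)
    ⟨p, fun z => (hp z).2⟩ ⟨x, .inl rfl⟩
  exacts [hz y hyx (.inr rfl), hz x hxy (.inl rfl)]

theorem isSucc_injective {s x y : M} (hx : IsSucc s x) (hy : IsSucc s y) : x = y := by
  rcases (hx y).1 ((hy y).2 (.inr rfl)) with hyx | rfl
  · exact ((hy x).1 ((hx x).2 (.inr rfl))).elim (absurd · (hM.notMem_of_mem hyx)) id
  · rfl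

theorem exists_isPair (x y : M) : ∃ p : M, IsPair p x y := by
  obtain ⟨s, hs⟩ := hM.exists_upair x x
  obtain ⟨t, ht⟩ := hM.exists_upair x y
  exact (hM.exists_upair s t).imp fun _ hp => ⟨s, t, hs, ht, hp⟩

end Axioms
end SatZFminus

namespace SetModel

variable {M : SetModel} {A : Set M}

/-- The set `f`, viewed as a binary relation, contains the ordered pair `(x, y)`. -/
def PairMem (f x y : M) : Prop :=
  ∃ p ∈ f, IsPair p x y

instance : IsDefinableRel₃ LSP A (PairMem (M := M)) := by
  unfold PairMem
  infer_instance

/-- `f` is an initial piece of the sequence starting with `a` in which each term is obtained from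
the previous one by the relation `G`: every pair in `f` is `(∅, a)` or of the form `(m + 1, z)`,
where `(m, w)` is in `f` for some `w` with `G w z`. -/
def IsApproximation (G : M → M → Prop) (a f : M) : Prop :=
  ∀ n z, PairMem f n z → ((∀ u, u ∉ n) ∧ z = a) ∨ ∃ m w, PairMem f m w ∧ IsSucc n m ∧ G w z

/-- `z` is an `n`-th iterate of the relation `G` starting from `a`. -/
def IsIterate (G : M → M → Prop) (a n z : M) : Prop :=
  ∃ f, IsApproximation G a f ∧ PairMem f n z

instance (G : M → M → Prop) [IsDefinableRel LSP univ G] (a : M) :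
    IsDefinableRel LSP univ (IsIterate G a) := by
  unfold IsIterate IsApproximation
  infer_instance

end SetModel

namespace SatZFminus

variable {M : SetModel}

section Iteration

variable (hM : SatZFminus M)
include hM

theorem exists_insert_pair (f x y : M) :
    ∃ g : M, ∀ x' y', PairMem g x' y' ↔ PairMem f x' y' ∨ x' = x ∧ y' = y := by
  obtain ⟨p, hp⟩ := hM.exists_isPair x y
  obtain ⟨g, hg⟩ := hM.exists_insert f p
  refine ⟨g, fun x' y' => ⟨?_, ?_⟩⟩
  · rintro ⟨q, hq, hqp⟩
    obtain hqf | rfl := (hg q).1 hq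
    exacts [.inl ⟨q, hqf, hqp⟩, .inr (hqp.injective hp)]
  · rintro (⟨q, hq, hqp⟩ | ⟨rfl, rfl⟩)
    exacts [⟨q, (hg q).2 (.inl hq), hqp⟩, ⟨p, (hg p).2 (.inr rfl), hp⟩]

theorem isSmall_dom (f : M) : IsSmall fun x => ∃ y, PairMem f x y := by
  obtain ⟨u, hu⟩ := hM.exists_sUnion f
  obtain ⟨d, hd⟩ := hM.exists_sUnion u
  exact ⟨d, fun x ⟨_, p, hp, s, _, hs, _, hst⟩ =>
    (hd x).2 ⟨s, (hu s).2 ⟨p, hp, (hst s).2 (.inl rfl)⟩, (hs x).2 (.inl rfl)⟩⟩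

variable {G : M → M → Prop} {a : M}

theorem isIterate_zero {n : M} (hn : ∀ u, u ∉ n) : IsIterate G a n a := by
  obtain ⟨f, hf⟩ := hM.exists_insert_pair n n a
  have hn' (x y : M) : ¬PairMem n x y := fun ⟨p, hp, _⟩ => hn p hp
  exact ⟨f, fun x y hxy => .inl (by grind), by grind⟩

theorem isIterate_succ {m n w z : M} (h : IsIterate G a m w) (hn : IsSucc n m) (hG : G w z) :
    IsIterate G a n z := by
  obtain ⟨f, hf, hmw⟩ := h
  obtain ⟨g, hg⟩ := hM.exists_insert_pair f n z
  refine ⟨g, fun x y hxy => ?_, (hg n z).2 (.inr ⟨rfl, rfl⟩)⟩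
  obtain hxy | ⟨rfl, rfl⟩ := (hg x y).1 hxy
  · exact (hf x y hxy).imp_right fun ⟨m', w', hmw', hs⟩ => ⟨m', w', (hg _ _).2 (.inl hmw'), hs⟩
  · exact .inr ⟨m, w, (hg _ _).2 (.inl hmw), hn, hG⟩

theorem isIterate_right_unique (hG : ∀ w z z', G w z → G w z' → z = z') {n z z' : M}
    (h : IsIterate G a n z) (h' : IsIterate G a n z') : z = z' := by
  obtain ⟨f, hf, hz⟩ := h
  obtain ⟨f', hf', hz'⟩ := h'
  by_contra hne
  obtain ⟨k, ⟨y, hy, y', hy', hyy'⟩, hmin⟩ := hM.exists_minimal_of_isSmall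
    (fun k => ∃ y, PairMem f k y ∧ ∃ y', PairMem f' k y' ∧ y ≠ y')
    ((hM.isSmall_dom f).mono fun k ⟨y, hy, _⟩ => ⟨y, hy⟩) ⟨n, z, hz, z', hz', hne⟩
  obtain ⟨hk, rfl⟩ | ⟨m, w, hw, hm, hwy⟩ := hf k y hy <;>
    obtain ⟨hk', rfl⟩ | ⟨m', w', hw', hm', hwy'⟩ := hf' k y' hy'
  · exact hyy' rfl
  · exact hk m' ((hm' m').2 (.inr rfl))
  · exact hk' m ((hm m).2 (.inr rfl))
  · obtain rfl := hM.isSucc_injective hm hm'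
    obtain rfl : w = w' := by
      by_contra hww'
      exact hmin m ((hm m).2 (.inr rfl)) ⟨w, hw, w', hw', hww'⟩
    exact hyy' (hG w y y' hwy hwy')

theorem exists_closed [IsDefinableRel LSP univ G] (hG : ∀ w z z', G w z → G w z' → z = z')
    (a : M) : ∃ C : M, a ∈ C ∧ ∀ w ∈ C, ∀ z, G w z → z ∈ C := by
  obtain ⟨i, ⟨e, hei, he⟩, hi⟩ := hM.infinity
  obtain ⟨C, hC⟩ := hM.exists_eq_of_isSmall (fun z => ∃ n ∈ i, IsIterate G a n z)
    (hM.isSmall_exists_mem _ fun n _ =>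
      hM.isSmall_of_unique fun z z' => hM.isIterate_right_unique hG)
  refine ⟨C, (hC a).2 ⟨e, hei, hM.isIterate_zero he⟩, fun w hw z hwz => ?_⟩
  obtain ⟨n, hn, hnw⟩ := (hC w).1 hw
  obtain ⟨s, hs, hsn⟩ := hi n hn
  exact (hC z).2 ⟨s, hs, hM.isIterate_succ hnw hsn hwz⟩

theorem exists_transitive_mem (x : M) : ∃ T : M, x ∈ T ∧ ∀ y ∈ T, y ⊆ T := by
  obtain ⟨C, hxC, hC⟩ := hM.exists_closed (G := fun w z => ∀ u, u ∈ z ↔ ∃ y ∈ w, u ∈ y)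
    (fun w z z' hz hz' => hM.ext' fun u => (hz u).trans (hz' u).symm) x
  obtain ⟨U, hU⟩ := hM.exists_sUnion C
  obtain ⟨T, hT⟩ := hM.exists_insert U x
  refine ⟨T, (hT x).2 (.inr rfl), fun y hy u hu => (hT u).2 (.inl ((hU u).2 ?_))⟩
  obtain hy | rfl := (hT y).1 hy
  · obtain ⟨w, hw, hyw⟩ := (hU y).1 hy
    obtain ⟨v, hv⟩ := hM.exists_sUnion w
    exact ⟨v, hC w hw v hv, (hv u).2 ⟨y, hyw, hu⟩⟩
  · exact ⟨y, hxC, hu⟩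

theorem exists_minimal (P : M → Prop) [IsDefinablePred LSP univ P] (hP : ∃ x, P x) :
    ∃ x, P x ∧ ∀ y ∈ x, ¬P y := by
  obtain ⟨x, hx⟩ := hP
  obtain ⟨T, hxT, hT⟩ := hM.exists_transitive_mem x
  obtain ⟨y, ⟨hyT, hy⟩, hmin⟩ :=
    hM.exists_minimal_of_isSmall (fun y => y ∈ T ∧ P y) ⟨T, fun _ => And.left⟩ ⟨x, hxT, hx⟩
  exact ⟨y, hy, fun z hz hPz => hmin z hz ⟨hT y hyT z hz, hPz⟩⟩

theorem mem_induction (P : M → Prop) [IsDefinablePred LSP univ P]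
    (h : ∀ x, (∀ y ∈ x, P y) → P x) (x : M) : P x := by
  by_contra hx
  obtain ⟨y, hy, hmin⟩ := hM.exists_minimal (¬P ·) ⟨x, hx⟩
  exact hy (h y fun z hz => not_not.1 (hmin z hz))

end Iteration
end SatZFminus

namespace SetModel

variable {M : SetModel} {A : Set M}

/-- `h` is a history: every `x ∈ h` is the set of all subsets of members of `x ∩ h`. -/
def IsHistory (h : M) : Prop :=
  ∀ x ∈ h, ∀ z : M, z ∈ x ↔ ∃ c ∈ x, c ∈ h ∧ z ⊆ c

/-- `s` is a level of the cumulative hierarchy, that is, of the form `V_α`. Ordinals are avoided by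
the Scott–Potter characterisation of levels as sets of all subsets of members of a history. -/
def IsLevel (s : M) : Prop :=
  ∃ h : M, IsHistory h ∧ ∀ z, z ∈ s ↔ ∃ c ∈ h, z ⊆ c

/-- `s` is the lowest level with property `P`. -/
def IsLeastLevel (P : M → Prop) (s : M) : Prop :=
  IsLevel s ∧ P s ∧ ∀ r ∈ s, IsLevel r → ¬P r

instance : IsDefinablePred LSP A (IsHistory (M := M)) := by
  unfold IsHistory
  infer_instance

instance : IsDefinablePred LSP A (IsLevel (M := M)) := by
  unfold IsLevel
  infer_instance

instance {ι : Type*} {P : (ι → M) → M → Prop} {i : ι}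
    [hP : IsDefinable LSP A fun v : Option ι → M => P (fun j => v (some j)) (v none)] :
    IsDefinable LSP A fun v => IsLeastLevel (P v) (v i) := by
  have : IsDefinable LSP A fun v => P v (v i) := hP.subst fun j v => v (j.elim i id)
  unfold IsLeastLevel
  infer_instance

theorem subset_trans {x y z : M} (hxy : x ⊆ y) (hyz : y ⊆ z) : x ⊆ z :=
  fun u hu => hyz u (hxy u hu)

end SetModel

namespace SatZFminus

variable {M : SetModel}

section Levels

variable (hM : SatZFminus M)
include hM

theorem transitive_of_isHistory {h x : M} (hh : IsHistory h) (hx : x ∈ h) : ∀ y ∈ x, y ⊆ x := by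
  by_contra hnot
  obtain ⟨x, ⟨hx, hxt⟩, hmin⟩ :=
    hM.exists_minimal (fun x => x ∈ h ∧ ¬∀ y ∈ x, y ⊆ x) ⟨x, hx, hnot⟩
  refine hxt fun y hy u hu => ?_
  obtain ⟨c, hcx, hch, hyc⟩ := (hh x hx y).1 hy
  have hct : ∀ y ∈ c, y ⊆ c := by_contra fun hct => hmin c hcx ⟨hch, hct⟩
  exact (hh x hx u).2 ⟨c, hcx, hch, hct u (hyc u hu)⟩

theorem isLevel_of_mem_isHistory {h x : M} (hh : IsHistory h) (hx : x ∈ h) : IsLevel x := by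
  obtain ⟨k, hk⟩ := hM.exists_separation (· ∈ h) x
  refine ⟨k, fun y hy z => ?_, fun z => by simp only [hh x hx z, hk, and_assoc]⟩
  obtain ⟨hyx, hyh⟩ := (hk y).1 hy
  rw [hh y hyh z]
  refine exists_congr fun c => and_congr_right fun hcy => and_congr_left fun _ => ?_
  rw [hk, and_iff_right (hM.transitive_of_isHistory hh hx y hyx c hcy)]

theorem isLevel_transitive {s x : M} (hs : IsLevel s) (hx : x ∈ s) : x ⊆ s := fun u hu => by
  obtain ⟨h, hh, hs⟩ := hs
  obtain ⟨c, hc, hxc⟩ := (hs x).1 hx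
  exact (hs u).2 ⟨c, hc, hM.transitive_of_isHistory hh hc u (hxc u hu)⟩

theorem mem_isLevel_iff {s z : M} (hs : IsLevel s) : z ∈ s ↔ ∃ r ∈ s, IsLevel r ∧ z ⊆ r := by
  obtain ⟨h, hh, hsh⟩ := hs
  refine (hsh z).trans ⟨fun ⟨c, hc, hzc⟩ => ?_, fun ⟨r, hr, _, hzr⟩ => ?_⟩
  · exact ⟨c, (hsh c).2 ⟨c, hc, fun _ => id⟩, hM.isLevel_of_mem_isHistory hh hc, hzc⟩
  · obtain ⟨c, hc, hrc⟩ := (hsh r).1 hr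
    exact ⟨c, hc, subset_trans hzr hrc⟩

theorem isLevel_iff {s : M} : IsLevel s ↔ ∀ z : M, z ∈ s ↔ ∃ r ∈ s, IsLevel r ∧ z ⊆ r := by
  refine ⟨fun hs z => hM.mem_isLevel_iff hs, fun hs => ?_⟩
  obtain ⟨h, hh⟩ := hM.exists_separation IsLevel s
  refine ⟨h, fun x hx z => ?_, fun z => by simp only [hs z, hh, and_assoc]⟩
  obtain ⟨hxs, hxl⟩ := (hh x).1 hx
  refine (hM.mem_isLevel_iff hxl).trans (exists_congr fun r => and_congr_right fun hr => ?_)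
  rw [hh, and_assoc]
  exact (and_iff_right ((hs r).2 ⟨x, hxs, hxl, hM.isLevel_transitive hxl hr⟩)).symm

theorem mem_of_subset_isLevel {s x y : M} (hs : IsLevel s) (hxy : x ⊆ y) (hy : y ∈ s) : x ∈ s := by
  obtain ⟨r, hr, hrl, hyr⟩ := (hM.mem_isLevel_iff hs).1 hy
  exact (hM.mem_isLevel_iff hs).2 ⟨r, hr, hrl, subset_trans hxy hyr⟩

theorem isLevel_trichotomy {r s : M} (hr : IsLevel r) (hs : IsLevel s) :
    r ∈ s ∨ r = s ∨ s ∈ r := by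
  by_contra hrs
  obtain ⟨r, ⟨hr, s, hs, hrs⟩, hrmin⟩ := hM.exists_minimal
    (fun r => IsLevel r ∧ ∃ s, IsLevel s ∧ ¬(r ∈ s ∨ r = s ∨ s ∈ r)) ⟨r, hr, s, hs, hrs⟩
  obtain ⟨s, ⟨hs, hrs⟩, hsmin⟩ := hM.exists_minimal
    (fun s => IsLevel s ∧ ¬(r ∈ s ∨ r = s ∨ s ∈ r)) ⟨s, hs, hrs⟩
  refine hrs (.inr (.inl (hM.ext' fun z => ⟨fun hz => ?_, fun hz => ?_⟩)))
  · obtain ⟨t, htr, ht, hzt⟩ := (hM.mem_isLevel_iff hr).1 hz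
    obtain hts | rfl | hst : t ∈ s ∨ t = s ∨ s ∈ t :=
      by_contra fun hts => hrmin t htr ⟨ht, s, hs, hts⟩
    exacts [hM.mem_of_subset_isLevel hs hzt hts, absurd (.inr (.inr htr)) hrs,
      absurd (.inr (.inr (hM.isLevel_transitive hr htr s hst))) hrs]
  · obtain ⟨t, hts, ht, hzt⟩ := (hM.mem_isLevel_iff hs).1 hz
    obtain hrt | rfl | htr : r ∈ t ∨ r = t ∨ t ∈ r :=
      by_contra fun hrt => hsmin t hts ⟨ht, hrt⟩
    exacts [absurd (.inl (hM.isLevel_transitive hs hts r hrt)) hrs, absurd (.inl hts) hrs,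
      hM.mem_of_subset_isLevel hr hzt htr]

theorem existsUnique_isLeastLevel (P : M → Prop) [IsDefinablePred LSP univ P]
    (h : ∃ s, IsLevel s ∧ P s) : ∃! s, IsLeastLevel P s := by
  obtain ⟨s, ⟨hs, hPs⟩, hmin⟩ := hM.exists_minimal (fun s => IsLevel s ∧ P s) h
  refine ⟨s, ⟨hs, hPs, fun r hr hrl hPr => hmin r hr ⟨hrl, hPr⟩⟩, fun r ⟨hr, hPr, hrmin⟩ => ?_⟩
  obtain hrs | hrs | hsr := hM.isLevel_trichotomy hr hs
  exacts [absurd ⟨hr, hPr⟩ (hmin r hrs), hrs, absurd hPs (hrmin s hsr hs)]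

theorem isLeastLevel_subset {P : M → Prop} {r s : M} (hs : IsLeastLevel P s) (hr : IsLevel r)
    (hPr : P r) : s ⊆ r := by
  obtain hrs | rfl | hsr := hM.isLevel_trichotomy hr hs.1
  exacts [absurd hPr (hs.2.2 r hrs hr), fun _ => id, hM.isLevel_transitive hr hsr]

theorem isLevel_of_forall_mem_iff {B s : M} (hB : ∀ b ∈ B, IsLevel b)
    (hs : ∀ z, z ∈ s ↔ ∃ b ∈ B, z ⊆ b) : IsLevel s := by
  refine hM.isLevel_iff.2 fun z => (hs z).trans ⟨fun ⟨b, hb, hzb⟩ => ?_, fun ⟨r, hr, _, hzr⟩ => ?_⟩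
  · exact ⟨b, (hs b).2 ⟨b, hb, fun _ => id⟩, hB b hb, hzb⟩
  · obtain ⟨b, hb, hrb⟩ := (hs r).1 hr
    exact ⟨b, hb, subset_trans hzr hrb⟩

theorem isLevel_sUnion {B s : M} (hB : ∀ b ∈ B, IsLevel b) (hs : ∀ z, z ∈ s ↔ ∃ b ∈ B, z ∈ b) :
    IsLevel s := by
  refine hM.isLevel_iff.2 fun z => (hs z).trans ⟨fun ⟨b, hb, hzb⟩ => ?_, fun ⟨r, hr, _, hzr⟩ => ?_⟩
  · obtain ⟨r, hr, hrl, hzr⟩ := (hM.mem_isLevel_iff (hB b hb)).1 hzb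
    exact ⟨r, (hs r).2 ⟨b, hb, hr⟩, hrl, hzr⟩
  · obtain ⟨b, hb, hrb⟩ := (hs r).1 hr
    exact ⟨b, hb, hM.mem_of_subset_isLevel (hB b hb) hzr hrb⟩

end Levels
end SatZFminus

namespace SatZF

variable {M : SetModel}

section Hierarchy

variable (hM : SatZF M)
include hM

theorem exists_isLevel_above (B : M) (hB : ∀ b ∈ B, IsLevel b) : ∃ s : M, IsLevel s ∧ B ⊆ s := by
  obtain ⟨s, hs⟩ := hM.exists_eq_of_isSmall (fun z => ∃ b ∈ B, z ⊆ b)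
    (hM.isSmall_exists_mem (fun b z => z ⊆ b) fun b _ => (hM.power b).imp fun p hp z => (hp z).2)
  exact ⟨s, hM.isLevel_of_forall_mem_iff hB hs, fun b hb => (hs b).2 ⟨b, hb, fun _ => id⟩⟩

theorem exists_isLevel_above_isLeastLevel (R : M → M → Prop) [IsDefinableRel LSP univ R] {a : M}
    (h : ∀ x ∈ a, ∃ s, IsLevel s ∧ R x s) :
    ∃ c : M, IsLevel c ∧ ∀ x ∈ a, ∃ s ∈ c, IsLevel s ∧ R x s := by
  have hL (x : M) (hx : x ∈ a) := hM.existsUnique_isLeastLevel (R x) (h x hx)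
  obtain ⟨B, hB⟩ := hM.exists_replacement (fun x s => IsLeastLevel (R x) s) hL
  obtain ⟨c, hc, hBc⟩ := hM.exists_isLevel_above B fun b hb =>
    let ⟨_, _, hxb⟩ := (hB b).1 hb
    hxb.1
  refine ⟨c, hc, fun x hx => ?_⟩
  obtain ⟨s, hs, -⟩ := hL x hx
  exact ⟨s, hBc s ((hB s).2 ⟨x, hx, hs⟩), hs.1, hs.2.1⟩

theorem exists_isLevel_mem (x : M) : ∃ s : M, IsLevel s ∧ x ∈ s := by
  refine hM.mem_induction (fun x => ∃ s, IsLevel s ∧ x ∈ s) (fun x hx => ?_) x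
  obtain ⟨c, hc, hxc⟩ := hM.exists_isLevel_above_isLeastLevel (fun y s => y ∈ s) hx
  obtain ⟨B, hB⟩ := hM.exists_upair c c
  obtain ⟨s, hs, hBs⟩ := hM.exists_isLevel_above B fun b hb => by
    obtain rfl | rfl := (hB b).1 hb <;> exact hc
  refine ⟨s, hs, hM.mem_of_subset_isLevel hs (fun y hy => ?_) (hBs c ((hB c).2 (.inl rfl)))⟩
  obtain ⟨r, hr, -, hyr⟩ := hxc y hy
  exact hM.isLevel_transitive hc hr y hyr

theorem exists_isLevel_collection (R : M → M → Prop) [IsDefinableRel LSP univ R] {a : M}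
    (h : ∀ x ∈ a, ∃ y, R x y) : ∃ c : M, IsLevel c ∧ ∀ x ∈ a, ∃ y ∈ c, R x y := by
  obtain ⟨c, hc, hac⟩ := hM.exists_isLevel_above_isLeastLevel (fun x s => ∃ y ∈ s, R x y)
    (a := a) fun x hx => by
      obtain ⟨y, hy⟩ := h x hx
      obtain ⟨s, hs, hys⟩ := hM.exists_isLevel_mem y
      exact ⟨s, hs, y, hys, hy⟩
  refine ⟨c, hc, fun x hx => ?_⟩
  obtain ⟨s, hs, -, y, hy, hxy⟩ := hac x hx
  exact ⟨y, hM.isLevel_transitive hc hs y hy, hxy⟩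

theorem exists_isLevel_closed (R : M → M → Prop) [IsDefinableRel LSP univ R]
    (hR : ∀ w, ∃ d, R w d) (x : M) : ∃ c : M, IsLevel c ∧ x ∈ c ∧ ∀ w ∈ c, ∃ d ∈ c, R w d := by
  have hG (w : M) := hM.existsUnique_isLeastLevel (fun s => ∀ u ∈ w, ∃ d ∈ s, R u d)
    (hM.exists_isLevel_collection R fun u _ => hR u)
  obtain ⟨s, hs, hxs⟩ := hM.exists_isLevel_mem x
  obtain ⟨C, hsC, hC⟩ := hM.exists_closed
    (G := fun w s => IsLeastLevel (fun s => ∀ u ∈ w, ∃ d ∈ s, R u d) s)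
    (fun w _ _ hz hz' => (hG w).unique hz hz') s
  obtain ⟨B, hB⟩ := hM.exists_separation IsLevel C
  obtain ⟨c, hc⟩ := hM.exists_sUnion B
  refine ⟨c, hM.isLevel_sUnion (fun b hb => ((hB b).1 hb).2) hc,
    (hc x).2 ⟨s, (hB s).2 ⟨hsC, hs⟩, hxs⟩, fun w hw => ?_⟩
  obtain ⟨b, hb, hwb⟩ := (hc w).1 hw
  obtain ⟨s', hs', -⟩ := hG b
  obtain ⟨d, hd, hwd⟩ := hs'.2.1 w hwb
  exact ⟨d, (hc d).2 ⟨s', (hB s').2 ⟨hC b ((hB b).1 hb).1 s' hs', hs'.1⟩, hd⟩, hwd⟩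

end Hierarchy
end SatZF

namespace SetModel

variable {M : SetModel} {A : Set M} {Q : M → M → Prop}

/-- `c` is a level such that, for each `m` in a member `w` of `c`, if the fibre `{z | Q z m}` is a
proper class, then it has an element in `c` which is not in `w`. -/
def IsReflecting (Q : M → M → Prop) (c : M) : Prop :=
  IsLevel c ∧ ∀ w ∈ c, ∀ m ∈ w, ¬IsSmall (Q · m) → ∃ z ∈ c, z ∉ w ∧ Q z m

/-- `c` is a reflecting level which is a limit of reflecting levels. -/
def IsReflectingLimit (Q : M → M → Prop) (c : M) : Prop :=
  IsReflecting Q c ∧ ∀ r ∈ c, ∃ e ∈ c, r ∈ e ∧ IsReflecting Q e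

/-- `z` appears between a limit of reflecting levels and the next reflecting level. -/
def AppearsAfterLimit (Q : M → M → Prop) (z : M) : Prop :=
  ∃ c, IsReflectingLimit Q c ∧ z ∉ c ∧ ∀ d, IsReflecting Q d → c ∈ d → z ∈ d

instance [IsDefinableRel LSP A Q] : IsDefinablePred LSP A (IsReflecting Q) := by
  unfold IsReflecting
  infer_instance

instance [IsDefinableRel LSP A Q] : IsDefinablePred LSP A (AppearsAfterLimit Q) := by
  unfold AppearsAfterLimit IsReflectingLimit
  infer_instance

end SetModel

namespace SatZF

variable {M : SetModel}

section Splitting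

variable (hM : SatZF M) (Q : M → M → Prop) [IsDefinableRel LSP univ Q]
include hM

theorem exists_forall_mem_exists_notMem (w : M) :
    ∃ d : M, ∀ m ∈ w, ¬IsSmall (Q · m) → ∃ z ∈ d, z ∉ w ∧ Q z m := by
  have hw (m : M) (_ : m ∈ w) : ∃ z, ¬IsSmall (Q · m) → z ∉ w ∧ Q z m := by
    by_contra! h
    exact (h m).1 ⟨w, fun z hz => by_contra fun hzw => (h z).2 hzw hz⟩
  obtain ⟨d, -, hd⟩ := hM.exists_isLevel_collection
    (fun m z => ¬IsSmall (Q · m) → z ∉ w ∧ Q z m) hw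
  exact ⟨d, fun m hm hQ => (hd m hm).imp fun z hz => ⟨hz.1, hz.2 hQ⟩⟩

theorem exists_isReflecting (x : M) : ∃ c, IsReflecting Q c ∧ x ∈ c := by
  obtain ⟨c, hc, hxc, hcl⟩ := hM.exists_isLevel_closed _ (hM.exists_forall_mem_exists_notMem Q) x
  refine ⟨c, ⟨hc, fun w hw m hm hQ => ?_⟩, hxc⟩
  obtain ⟨d, hd, hwd⟩ := hcl w hw
  obtain ⟨z, hz, hzw⟩ := hwd m hm hQ
  exact ⟨z, hM.isLevel_transitive hc hd z hz, hzw⟩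

theorem exists_isLeastLevel_isReflecting (x : M) :
    ∃ c, IsLeastLevel (fun c => IsReflecting Q c ∧ x ∈ c) c :=
  (hM.existsUnique_isLeastLevel (fun c => IsReflecting Q c ∧ x ∈ c)
    ((hM.exists_isReflecting Q x).imp fun _ hc => ⟨hc.1.1, hc⟩)).exists

theorem exists_isReflectingLimit (x : M) : ∃ c, IsReflectingLimit Q c ∧ x ∈ c := by
  obtain ⟨c, hc, hxc, hcl⟩ := hM.exists_isLevel_closed (fun w d => w ∈ d ∧ IsReflecting Q d)
    (fun w => (hM.exists_isReflecting Q w).imp fun _ => And.symm) x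
  refine ⟨c, ⟨⟨hc, fun w hw m hm hQ => ?_⟩, hcl⟩, hxc⟩
  obtain ⟨d, hd, hwd, hdQ⟩ := hcl w hw
  obtain ⟨z, hz, hzw⟩ := hdQ.2 w hwd m hm hQ
  exact ⟨z, hM.isLevel_transitive hc hd z hz, hzw⟩

variable {Q} {m : M} (hm : ¬IsSmall (Q · m))
include hm

theorem not_isSmall_and_appearsAfterLimit :
    ¬IsSmall fun z => Q z m ∧ AppearsAfterLimit Q z := by
  rintro ⟨b, hb⟩
  obtain ⟨x, hx⟩ := hM.exists_upair b m
  obtain ⟨c, hc, hxc⟩ := hM.exists_isReflectingLimit Q x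
  have hcx := hM.isLevel_transitive hc.1.1 hxc
  obtain ⟨c', hc'⟩ := hM.exists_isLeastLevel_isReflecting Q c
  obtain ⟨z, hz, hzc, hzm⟩ := hc'.2.1.1.2 c hc'.2.1.2 m (hcx m ((hx m).2 (.inr rfl))) hm
  have hzA : AppearsAfterLimit Q z :=
    ⟨c, hc, hzc, fun d hd hcd => hM.isLeastLevel_subset hc' hd.1 ⟨hd, hcd⟩ z hz⟩
  exact hzc (hM.isLevel_transitive hc.1.1 (hcx b ((hx b).2 (.inl rfl))) z (hb z ⟨hzm, hzA⟩))

theorem not_isSmall_and_not_appearsAfterLimit :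
    ¬IsSmall fun z => Q z m ∧ ¬AppearsAfterLimit Q z := by
  rintro ⟨b, hb⟩
  obtain ⟨x, hx⟩ := hM.exists_upair b m
  obtain ⟨c, hc⟩ := hM.exists_isLeastLevel_isReflecting Q x
  have hcx := hM.isLevel_transitive hc.1 hc.2.1.2
  obtain ⟨c', hc'⟩ := hM.exists_isLeastLevel_isReflecting Q c
  obtain ⟨z, hz, hzc, hzm⟩ := hc'.2.1.1.2 c hc'.2.1.2 m (hcx m ((hx m).2 (.inr rfl))) hm
  refine hzc (hM.isLevel_transitive hc.1 (hcx b ((hx b).2 (.inl rfl))) z (hb z ⟨hzm, ?_⟩))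
  rintro ⟨d, hd, hzd, hzA⟩
  obtain hdc | rfl | hcd := hM.isLevel_trichotomy hd.1.1 hc.1
  · exact hzc (hzA c hc.2.1.1 hdc)
  · obtain ⟨e, he, hxe, heQ⟩ := hd.2 x hc.2.1.2
    exact hc.2.2 e he heQ.1 ⟨heQ, hxe⟩
  · exact hzd (hM.isLeastLevel_subset hc' hd.1.1 ⟨hd.1, hcd⟩ z hz)

end Splitting
end SatZF

namespace SetModel

variable {M : SetModel} {A : Set M}

/-- `q` codes the finite sequence `p`, as an iterated ordered pair `(p 0, (p 1, (p 2, …)))`. The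
last component is arbitrary, so a sequence has many codes, but each `q` codes at most one sequence
of each length. -/
def IsTuple : {n : ℕ} → M → (Fin n → M) → Prop
  | 0, _, _ => True
  | _ + 1, q, p => ∃ r, IsPair q (p 0) r ∧ IsTuple r (Fin.tail p)

instance isDefinable_isTuple (n : ℕ) :
    IsDefinable LSP A fun v : Unit ⊕ Fin n → M => IsTuple (v (.inl ())) fun i => v (.inr i) := by
  induction n with
  | zero => exact inferInstanceAs (IsDefinable LSP A fun _ => True)
  | succ n ih =>
    have : IsDefinable LSP A fun v : Option (Unit ⊕ Fin (n + 1)) → M =>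
        IsTuple (v none) (Fin.tail fun i => v (some (.inr i))) :=
      ih.subst (κ := Option (Unit ⊕ Fin (n + 1))) fun i v =>
        v (i.elim (fun _ => none) (some ∘ .inr ∘ Fin.succ))
    unfold IsTuple
    infer_instance

theorem IsTuple.right_unique {n : ℕ} {q : M} {p p' : Fin n → M} (hp : IsTuple q p)
    (hp' : IsTuple q p') : p = p' := by
  induction n generalizing q with
  | zero => exact Subsingleton.elim p p'
  | succ n ih =>
    obtain ⟨r, hq, hr⟩ := hp
    obtain ⟨r', hq', hr'⟩ := hp'
    obtain ⟨h0, rfl⟩ := hq.injective hq'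
    rw [← Fin.cons_self_tail p, ← Fin.cons_self_tail p', h0, ih hr hr']

end SetModel

namespace SatZFminus

variable {M : SetModel}

section Parameters

variable (hM : SatZFminus M)
include hM

theorem exists_isTuple {n : ℕ} (p : Fin n → M) : ∃ q, IsTuple q p := by
  induction n with
  | zero => exact hM.infinity.imp fun _ _ => trivial
  | succ n ih =>
    obtain ⟨r, hr⟩ := ih (Fin.tail p)
    exact (hM.exists_isPair (p 0) r).imp fun _ hq => ⟨r, hq, hr⟩

theorem exists_parameterFree_fibre (P : M → Prop) [hP : IsDefinablePred LSP univ P] :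
    ∃ (Q : M → M → Prop) (m : M), IsDefinableRel LSP ∅ Q ∧ ∀ x, P x ↔ Q x m := by
  obtain ⟨n, p, φ, hφ⟩ := hP.exists_formula_parameters
  obtain ⟨q, hq⟩ := hM.exists_isTuple p
  have hφ' : IsDefinable LSP ∅ fun v : Fin 2 ⊕ Fin n → M =>
      φ.Realize (Sum.elim (fun _ : Fin 1 => v (.inl 0)) fun i => v (.inr i)) := by
    have := (IsDefinable.realize (A := (∅ : Set M)) φ).subst (κ := Fin 2 ⊕ Fin n) fun i v =>
      v (i.map (fun _ => 0) id)
    convert! this using 4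
    rename_i i
    cases i <;> rfl
  have hq' : IsDefinable LSP ∅ fun v : Fin 2 ⊕ Fin n → M =>
      IsTuple (v (.inl 1)) fun i => v (.inr i) :=
    (isDefinable_isTuple n).subst fun i v => v (i.map (fun _ => 1) id)
  refine ⟨fun x m => ∃ p, IsTuple m p ∧ φ.Realize (Sum.elim (fun _ => x) p), q, inferInstance,
    fun x => (hφ fun _ => x).trans ⟨fun h => ⟨p, hq, h⟩, fun ⟨p', hp', h⟩ => ?_⟩⟩
  rwa [hq.right_unique hp']

end Parameters
end SatZFminus

theorem SatZF.exists_parameterFree_split {M : SetModel} (hM : SatZF M) {P : M → Prop}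
    [IsDefinablePred LSP univ P] (hP : ¬IsSmall P) :
    ∃ A : M → Prop, IsDefinablePred LSP ∅ A ∧
      (¬IsSmall fun x => P x ∧ A x) ∧ ¬IsSmall fun x => P x ∧ ¬A x := by
  obtain ⟨Q, m, hQ, hPQ⟩ := hM.exists_parameterFree_fibre P
  have : IsDefinableRel LSP univ Q := hQ.weaken
  obtain rfl : P = (Q · m) := funext fun x => propext (hPQ x)
  exact ⟨AppearsAfterLimit Q, inferInstance, hM.not_isSmall_and_appearsAfterLimit hP,
    hM.not_isSmall_and_not_appearsAfterLimit hP⟩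

namespace SetModel

variable {M : SetModel}

/-- A class of assignments `ℕ → M` is large if the values of the variable `0` under the assignments
in it form a proper class. -/
def IsLarge (P : (ℕ → M) → Prop) : Prop :=
  ¬IsSmall fun x => ∃ v, P v ∧ v 0 = x

/-- Forcing conditions are the large classes of assignments which are definable with parameters.
A condition is a partial description of an element of an elementary extension, namely the value of
the variable `0`, which is to lie outside `M`, together with witnesses for existential statements,
the values of the other variables. -/
abbrev Condition (M : SetModel) : Type 1 :=
  {P : (ℕ → M) → Prop // IsDefinable LSP univ P ∧ IsLarge P}

instance (D : Condition M) : IsDefinable LSP univ D.1 :=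
  D.2.1

theorem IsLarge.mono {P Q : (ℕ → M) → Prop} (hP : IsLarge P)
    (h : ∀ v, P v → ∃ w, Q w ∧ w 0 = v 0) : IsLarge Q := fun hQ =>
  hP (hQ.mono fun _ ⟨v, hv, hvx⟩ => (h v hv).imp fun _ hw => ⟨hw.1, hw.2.trans hvx⟩)

theorem Condition.exists_le_forall (D : Condition M) (Q : (ℕ → M) → Prop)
    [IsDefinable LSP univ Q] (h : IsLarge fun v => D.1 v ∧ Q v) :
    ∃ D' ≤ D, ∀ v, D'.1 v → Q v :=
  ⟨⟨fun v => D.1 v ∧ Q v, inferInstance, h⟩, fun _ => And.left, fun _ => And.right⟩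

theorem Condition.exists_le_witness (D : Condition M) {Q : (ℕ → M) → M → Prop}
    [hQ : IsDefinable LSP univ fun v : Option ℕ → M => Q (fun i => v (some i)) (v none)]
    (h : ∀ v, D.1 v → ∃ x, Q v x) : ∃ D' ≤ D, ∃ k, ∀ v, D'.1 v → Q v (v k) := by
  have hD : IsDefinable LSP univ fun w : Option ℕ → M => D.1 fun i => w (some i) :=
    D.2.1.subst fun i w => w (some i)
  have hDQ : IsDefinable LSP univ fun w : Option ℕ → M =>
      D.1 (fun i => w (some i)) ∧ Q (fun i => w (some i)) (w none) := inferInstance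
  obtain ⟨s, hs⟩ := hDQ.exists_forall_update_iff
  obtain ⟨k, hk⟩ := Infinite.exists_notMem_finset (insert 0 s.eraseNone)
  obtain ⟨hk0, hks⟩ : k ≠ 0 ∧ some k ∉ s := by simpa using hk
  have : IsDefinable LSP univ fun v => Q v (v k) := hQ.subst fun i v => v (i.elim k id)
  obtain ⟨D', hD', hQ'⟩ := D.exists_le_forall (fun v => Q v (v k)) <| D.2.2.mono fun v hv => by
    obtain ⟨x, hx⟩ := h v hv
    have := (hs (some k) hks (fun i => i.elim x v) x).2 ⟨hv, hx⟩
    have hupdate : (fun i => Function.update (fun i : Option ℕ => i.elim x v) (some k) x (some i)) =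
        Function.update v k x := by
      ext i
      simp [Function.update_apply]
    refine ⟨Function.update v k x, ?_, Function.update_of_ne hk0.symm x v⟩
    rw [Function.update_self]
    simpa [hupdate] using this
  exact ⟨D', hD', k, hQ'⟩

end SetModel

namespace SatZFminus

variable {M : SetModel}

section Forcing

variable (hM : SatZFminus M)
include hM

theorem isLarge_true : IsLarge fun _ : ℕ → M => True := fun ⟨b, hb⟩ =>
  hM.notMem_self b (hb b ⟨fun _ => b, trivial, rfl⟩)

variable (D : Condition M)

theorem exists_of_condition : ∃ v, D.1 v := by
  by_contra! hD
  exact D.2.2 (hM.infinity.imp fun _ _ _ ⟨v, hv, _⟩ => absurd hv (hD v))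

theorem exists_le_forall_or_forall_not (Q : (ℕ → M) → Prop) [IsDefinable LSP univ Q] :
    ∃ D' ≤ D, (∀ v, D'.1 v → Q v) ∨ ∀ v, D'.1 v → ¬Q v := by
  by_cases hQ : IsLarge fun v => D.1 v ∧ Q v
  · exact (D.exists_le_forall Q hQ).imp fun _ => And.imp_right .inl
  · refine (D.exists_le_forall (¬Q ·) fun hQ' => D.2.2 ?_).imp fun _ => And.imp_right .inr
    exact (hM.isSmall_or (not_not.1 hQ) hQ').mono fun x ⟨v, hv, hvx⟩ =>
      (em (Q v)).imp (fun h => ⟨v, ⟨hv, h⟩, hvx⟩) fun h => ⟨v, ⟨hv, h⟩, hvx⟩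

theorem exists_le_forall_not_exists_or_witness (Q : (ℕ → M) → M → Prop)
    [IsDefinable LSP univ fun v : Option ℕ → M => Q (fun i => v (some i)) (v none)] :
    ∃ D' ≤ D, (∀ v, D'.1 v → ¬∃ x, Q v x) ∨ ∃ k, ∀ v, D'.1 v → Q v (v k) := by
  obtain ⟨D', hD', h | h⟩ := hM.exists_le_forall_or_forall_not D fun v => ∃ x, Q v x
  · obtain ⟨D'', hD'', h⟩ := D'.exists_le_witness h
    exact ⟨D'', hD''.trans hD', .inr h⟩
  · exact ⟨D', hD', .inl h⟩

theorem exists_le_forall_zero_notMem (a : M) : ∃ D' ≤ D, ∀ v, D'.1 v → v 0 ∉ a := by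
  obtain ⟨D', hD', h | h⟩ := hM.exists_le_forall_or_forall_not D fun v => v 0 ∈ a
  · exact absurd ⟨a, fun x ⟨v, hv, hvx⟩ => hvx ▸ h v hv⟩ D'.2.2
  · exact ⟨D', hD', h⟩

theorem exists_le_forall_notMem_or_eq (k : ℕ) (a : M) :
    ∃ D' ≤ D, (∀ v, D'.1 v → v k ∉ a) ∨ ∃ b, ∀ v, D'.1 v → v k = b := by
  obtain ⟨D, hD, h | h⟩ := hM.exists_le_forall_or_forall_not D fun v => v k ∈ a
  · by_contra! hnot
    have hsmall (b : M) : IsSmall fun x => ∃ v, D.1 v ∧ v k = b ∧ v 0 = x := by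
      by_contra hb
      obtain ⟨D', hD', h'⟩ := D.exists_le_forall (fun v => v k = b) (by simpa [IsLarge, and_assoc])
      obtain ⟨v, hv, hvb⟩ := (hnot D' (hD'.trans hD)).2 b
      exact hvb (h' v hv)
    have : Nonempty M := ⟨a⟩
    have := D.2.1.image_eval₂ k 0
    refine D.2.2 ((hM.isSmall_exists_mem (a := a) _ fun b _ => hsmall b).mono ?_)
    exact fun x ⟨v, hv, hvx⟩ => ⟨v k, h v hv, v, hv, rfl, hvx⟩
  · exact ⟨D, hD, .inl h⟩

end Forcing
end SatZFminus

theorem SatZF.exists_le_exists_le_parameterFree_split {M : SetModel} (hM : SatZF M)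
    (D : Condition M) :
    ∃ D₁ ≤ D, ∃ D₂ ≤ D, ∃ A : M → Prop, IsDefinablePred LSP ∅ A ∧
      (∀ v, D₁.1 v → A (v 0)) ∧ ∀ v, D₂.1 v → ¬A (v 0) := by
  have : Nonempty M := hM.infinity.nonempty
  have := D.2.1.image_eval 0
  obtain ⟨A, hA, h₁, h₂⟩ := hM.exists_parameterFree_split D.2.2
  have : IsDefinablePred LSP univ A := hA.weaken
  have hsplit {B : M → Prop} (hB : ¬IsSmall fun x => (∃ v, D.1 v ∧ v 0 = x) ∧ B x) :
      IsLarge fun v => D.1 v ∧ B (v 0) := fun h =>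
    hB (h.mono fun x ⟨⟨v, hv, hvx⟩, hx⟩ => ⟨v, ⟨hv, hvx ▸ hx⟩, hvx⟩)
  obtain ⟨D₁, hD₁, hA₁⟩ := D.exists_le_forall (fun v => A (v 0)) (hsplit h₁)
  obtain ⟨D₂, hD₂, hA₂⟩ := D.exists_le_forall (fun v => ¬A (v 0)) (hsplit h₂)
  exact ⟨D₁, hD₁, D₂, hD₂, A, hA, hA₁, hA₂⟩

theorem exists_perfect_tree {P ι : Type*} [Preorder P] [Nonempty P] [Countable ι]
    {D : ι → Set P} (hD : ∀ i, IsCoinitial (D i))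
    {R : P → P → Prop} (hR : ∀ p, ∃ q ≤ p, ∃ r ≤ p, R q r) :
    ∃ p : (ℕ → Bool) → ℕ → P, (∀ g, Antitone (p g)) ∧ (∀ g i, ∃ n, p g n ∈ D i) ∧
      ∀ g h, g ≠ h → ∃ n q r, p g n ≤ q ∧ p h n ≤ r ∧ (R q r ∨ R r q) := by
  obtain ⟨e, he⟩ := exists_injective_nat ι
  have hmeet (n : ℕ) (p : P) : ∃ q ≤ p, ∀ i, e i = n → q ∈ D i := by
    by_cases hn : ∃ i, e i = n
    · obtain ⟨i, rfl⟩ := hn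
      obtain ⟨q, hq, hqp⟩ := hD i p
      exact ⟨q, hqp, fun j hj => he hj ▸ hq⟩
    · exact ⟨p, le_rfl, fun i hi => absurd ⟨i, hi⟩ hn⟩
  choose meet meet_le hmeet using hmeet
  choose l l_le r r_le hlr using hR
  let child (p : P) (b : Bool) : P := if b then l p else r p
  have child_le (p : P) (b : Bool) : child p b ≤ p := by cases b <;> simp [child, l_le, r_le]
  have hchild (p : P) {b c : Bool} (hbc : b ≠ c) :
      R (child p b) (child p c) ∨ R (child p c) (child p b) := by
    cases b <;> cases c <;> simp_all [child]
  let p (g : ℕ → Bool) : ℕ → P :=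
    Nat.rec (Classical.arbitrary P) fun n q => meet n (child q (g n))
  refine ⟨p, fun g => antitone_nat_of_succ_le fun n => (meet_le _ _).trans (child_le _ _),
    fun g i => ⟨e i + 1, hmeet _ _ i rfl⟩, fun g h hgh => ?_⟩
  obtain ⟨n, hn, hmin⟩ := exists_minimal_of_wellFoundedLT (fun n => g n ≠ h n)
    (Function.ne_iff.1 hgh)
  have heq (m : ℕ) (hm : m ≤ n) : p g m = p h m := by
    induction m with
    | zero => rfl
    | succ m ih =>
      have hgm : g m = h m := by_contra fun hgm => (hmin hgm (by lia)).not_gt hm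
      exact congrArg₂ (fun q b => meet m (child q b)) (ih (by lia)) hgm
  refine ⟨n + 1, child (p g n) (g n), child (p g n) (h n), meet_le _ _, ?_, hchild _ hn⟩
  exact heq n le_rfl ▸ meet_le _ _

theorem exists_ultrafilter_of_antitone {α : Type*} {s : ℕ → Set α} (hs : Antitone s)
    (hne : ∀ n, (s n).Nonempty) : ∃ U : Ultrafilter α, ∀ n, s n ∈ U := by
  have : Nonempty α := (hne 0).nonempty
  have : (⨅ n, 𝓟 (s n)).NeBot := iInf_neBot_of_directed
    (Antitone.directed_ge fun _ _ hmn => principal_mono.2 (hs hmn))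
    fun n => principal_neBot_iff.2 (hne n)
  exact ⟨.of _, fun n => Ultrafilter.of_le _ (mem_iInf_of_mem n (mem_principal_self _))⟩

instance : Countable LSP.Symbols := by
  have (n : ℕ) : Countable (LSP.Functions n) := inferInstanceAs (Countable Empty)
  have : ∀ n, Countable (LSP.Relations n)
    | 1 | 2 => inferInstanceAs (Countable Unit)
    | 0 | _ + 3 => inferInstanceAs (Countable Empty)
  exact inferInstanceAs (Countable ((Σ n, LSP.Functions n) ⊕ Σ n, LSP.Relations n))

namespace SetModel

variable {M : SetModel}

/-- The sets of conditions which a generic ultrafilter has to meet. The three kinds of requirements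
ask for a variable naming a witness of an existential statement, for a variable bounded by an
element of `M` to be constant, and for the variable `0` to avoid an element of `M`. -/
def requirement :
    {Q : (Option ℕ → M) → Prop // IsDefinable LSP univ Q} ⊕ (ℕ × M) ⊕ M → Set (Condition M)
  | .inl Q => {D | (∀ v, D.1 v → ¬∃ x, Q.1 fun i => i.elim x v) ∨
      ∃ k, ∀ v, D.1 v → Q.1 fun i => i.elim (v k) v}
  | .inr (.inl (k, a)) => {D | (∀ v, D.1 v → v k ∉ a) ∨ ∃ b, ∀ v, D.1 v → v k = b}
  | .inr (.inr a) => {D | ∀ v, D.1 v → v 0 ∉ a}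

/-- An ultrafilter on the set of assignments is generic if it contains a condition from each of the
sets `requirement i`. -/
def IsGeneric (U : Ultrafilter (ℕ → M)) : Prop :=
  ∀ i, ∃ D ∈ requirement (M := M) i, ∀ᶠ v in U, D.1 v

namespace IsGeneric

variable {U : Ultrafilter (ℕ → M)} (hU : IsGeneric U)
include hU

theorem exists_eventually_of_eventually_exists {Q : (ℕ → M) → M → Prop}
    [hQ : IsDefinable LSP univ fun v : Option ℕ → M => Q (fun i => v (some i)) (v none)]
    (h : ∀ᶠ v in U, ∃ x, Q v x) : ∃ k, ∀ᶠ v in U, Q v (v k) := by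
  obtain ⟨D, hD | ⟨k, hD⟩, hDU⟩ := hU (.inl ⟨_, hQ⟩)
  · obtain ⟨v, hv, hDv⟩ := (h.and hDU).exists
    exact absurd hv (hD v hDv)
  · exact ⟨k, hDU.mono hD⟩

theorem exists_eventually_eq_of_eventually_mem {k : ℕ} {a : M} (h : ∀ᶠ v : ℕ → M in U, v k ∈ a) :
    ∃ b, ∀ᶠ v : ℕ → M in U, v k = b := by
  obtain ⟨D, hD | ⟨b, hD⟩, hDU⟩ := hU (.inr (.inl (k, a)))
  · obtain ⟨v, hv, hDv⟩ := (h.and hDU).exists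
    exact absurd hv (hD v hDv)
  · exact ⟨b, hDU.mono hD⟩

theorem eventually_zero_notMem (a : M) : ∀ᶠ v : ℕ → M in U, v 0 ∉ a := by
  obtain ⟨D, hD, hDU⟩ := hU (.inr (.inr a))
  exact hDU.mono hD

end IsGeneric
end SetModel

theorem SatZFminus.isCoinitial_requirement {M : SetModel} (hM : SatZFminus M)
    (i : {Q : (Option ℕ → M) → Prop // IsDefinable LSP univ Q} ⊕ (ℕ × M) ⊕ M) :
    IsCoinitial (requirement i) := fun D => by
  obtain ⟨Q, hQ⟩ | ⟨k, a⟩ | a := i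
  · have helim (v : Option ℕ → M) : (fun i => i.elim (v none) fun j => v (some j)) = v :=
      funext (Option.elim_none_some v)
    have : IsDefinable LSP univ fun v : Option ℕ → M =>
        Q fun i => i.elim (v none) fun j => v (some j) := by
      simpa only [helim] using hQ
    obtain ⟨D', hD', h⟩ := hM.exists_le_forall_not_exists_or_witness D
      fun v x => Q fun i => i.elim x v
    exact ⟨D', h, hD'⟩
  · obtain ⟨D', hD', h⟩ := hM.exists_le_forall_notMem_or_eq D k a
    exact ⟨D', h, hD'⟩
  · obtain ⟨D', hD', h⟩ := hM.exists_le_forall_zero_notMem D a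
    exact ⟨D', h, hD'⟩

theorem SatZF.exists_isGeneric_separated {M : SetModel} [Countable M] (hM : SatZF M) :
    ∃ U : (ℕ → Bool) → Ultrafilter (ℕ → M), (∀ g, IsGeneric (U g)) ∧
      ∀ g h, g ≠ h → ∃ A : M → Prop, IsDefinablePred LSP ∅ A ∧
        (∀ᶠ v : ℕ → M in U g, A (v 0)) ∧ ∀ᶠ v : ℕ → M in U h, ¬A (v 0) := by
  have : Nonempty (Condition M) := ⟨⟨fun _ => True, inferInstance, hM.isLarge_true⟩⟩
  obtain ⟨D, hDanti, hDmeet, hDsplit⟩ := exists_perfect_tree hM.isCoinitial_requirement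
    (hM.exists_le_exists_le_parameterFree_split ·)
  have hU (g : ℕ → Bool) :
      ∃ U : Ultrafilter (ℕ → M), ∀ n, ∀ᶠ v : ℕ → M in U, (D g n).1 v :=
    exists_ultrafilter_of_antitone (fun _ _ hmn => hDanti g hmn) fun n =>
      hM.exists_of_condition (D g n)
  choose U hU using hU
  refine ⟨U, fun g i => ?_, fun g h hgh => ?_⟩
  · obtain ⟨n, hn⟩ := hDmeet g i
    exact ⟨D g n, hn, hU g n⟩
  · obtain ⟨n, D₁, D₂, hD₁, hD₂, ⟨A, hA, h₁, h₂⟩ | ⟨A, hA, h₂, h₁⟩⟩ := hDsplit g h hgh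
    · exact ⟨A, hA, (hU g n).mono fun v hv => h₁ v (hD₁ v hv),
        (hU h n).mono fun v hv => h₂ v (hD₂ v hv)⟩
    · exact ⟨fun x => ¬A x, inferInstance, (hU g n).mono fun v hv => h₁ v (hD₁ v hv),
        (hU h n).mono fun v hv => not_not.2 (h₂ v (hD₂ v hv))⟩

namespace SetModel

/-- The unary relation symbol of `LSP`. -/
def predSymbol : LSP.Relations 1 :=
  ()

/-- A structure for the language `LSP`, regarded as a model of the language of set theory. -/
def ofStructure (X : Type 1) [LSP.Structure X] : SetModel :=
  ⟨X, fun x y => Structure.RelMap memSymbol ![x, y], fun x => Structure.RelMap predSymbol ![x]⟩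

theorem ofStructure_str (X : Type 1) [S : LSP.Structure X] : (ofStructure X).str = S := by
  refine Structure.ext (funext fun n => funext fun f => Empty.elim f) (funext fun n => ?_)
  match n with
  | 0 | _ + 3 => exact funext fun r => Empty.elim r
  | 1 =>
    funext r v
    exact congrArg (S.RelMap r) (funext (Fin.forall_fin_one.2 rfl) : ![v 0] = v)
  | 2 =>
    funext r v
    exact congrArg (S.RelMap r) (funext (Fin.forall_fin_two.2 ⟨rfl, rfl⟩) : ![v 0, v 1] = v)

theorem realize_ofStructure {X : Type 1} [S : LSP.Structure X] {n : ℕ} (φ : LSP.Formula (Fin n))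
    (v : Fin n → X) : (ofStructure X).Realize φ v ↔ φ.Realize v := by
  unfold Realize
  rw [ofStructure_str]
  rfl

variable {M : SetModel}

/-- The ultrapower of `M` by an ultrafilter on the set of assignments in `M`. -/
abbrev Ultrapower (U : Ultrafilter (ℕ → M)) : Type 1 :=
  (U : Filter (ℕ → M)).Product fun _ => M

/-- The element of the ultrapower of `M` named by the variable `k`: the germ of the map sending an
assignment to its value at `k`. -/
def coordinate (U : Ultrafilter (ℕ → M)) (k : ℕ) : Ultrapower U :=
  ((fun v => v k : (ℕ → M) → M) : Ultrapower U)

/-- The elements of the ultrapower of `M` which are named by a variable. -/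
def coordinates (U : Ultrafilter (ℕ → M)) : LSP.Substructure (Ultrapower U) where
  carrier := range (coordinate U)
  fun_mem f := Empty.elim f

namespace IsGeneric

variable {U : Ultrafilter (ℕ → M)} (hU : IsGeneric U)
include hU

theorem exists_eventually_realize {n : ℕ} (φ : LSP.BoundedFormula Empty n) (σ : Fin n → Option ℕ)
    (h : ∀ᶠ v : ℕ → M in U, ∃ x, φ.Realize default fun i => (σ i).elim x v) :
    ∃ k, ∀ᶠ v : ℕ → M in U, φ.Realize default fun i => (σ i).elim (v k) v := by
  have hφ : IsDefinable LSP univ fun v : Option ℕ → M =>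
      φ.Realize default fun i => (σ i).elim (v none) fun j => v (some j) := by
    have (v : Option ℕ → M) : (φ.Realize default fun i => (σ i).elim (v none) fun j => v (some j)) ↔
        φ.toFormula.Realize fun i => v (i.elim Empty.elim σ) := by
      rw [BoundedFormula.realize_toFormula]
      refine iff_of_eq (congrArg₂ _ (Subsingleton.elim _ _) (funext fun i => ?_))
      exact Option.elim_none_some v (σ i)
    simp only [this]
    exact (IsDefinable.realize φ.toFormula).subst fun i v => v (i.elim Empty.elim σ)
  exact hU.exists_eventually_of_eventually_exists (hQ := hφ) h

theorem coordinates_tarskiVaught (n : ℕ) (φ : LSP.BoundedFormula Empty (n + 1))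
    (x : Fin n → coordinates U) (a : Ultrapower U)
    (h : φ.Realize default (Fin.snoc ((↑) ∘ x) a : _ → Ultrapower U)) :
    ∃ b : coordinates U, φ.Realize default (Fin.snoc ((↑) ∘ x) b : _ → Ultrapower U) := by
  have : Nonempty M := (U.nonempty_of_mem univ_mem).elim fun v _ => ⟨v 0⟩
  choose k hk using fun i => (x i).2
  obtain ⟨f, rfl⟩ := Quotient.exists_rep a
  let σ : Fin (n + 1) → Option ℕ := Fin.snoc (fun i => some (k i)) none
  have hsnoc (f : (ℕ → M) → M) : (Fin.snoc ((↑) ∘ x) (f : Ultrapower U) : _ → Ultrapower U) =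
      fun i => ((fun v => (σ i).elim (f v) v : (ℕ → M) → M) : Ultrapower U) := by
    funext i
    refine Fin.lastCases ?_ (fun i => ?_) i
    · simp only [σ, Fin.snoc_last, Option.elim]
      exact Fin.snoc_last ..
    · simp only [σ, Fin.snoc_castSucc, Option.elim]
      exact (Fin.snoc_castSucc ..).trans (hk i).symm
  have hlos (f : (ℕ → M) → M) :
      φ.Realize default (Fin.snoc ((↑) ∘ x) (f : Ultrapower U) : _ → Ultrapower U) ↔
        ∀ᶠ v in U, φ.Realize default fun i => (σ i).elim (f v) v := by
    rw [hsnoc, ← Ultraproduct.boundedFormula_realize_cast]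
    exact iff_of_eq (congrArg₂ _ (Subsingleton.elim _ _) rfl)
  obtain ⟨l, hl⟩ := hU.exists_eventually_realize φ σ (((hlos f).1 h).mono fun v hv => ⟨_, hv⟩)
  exact ⟨⟨coordinate U l, l, rfl⟩, (hlos _).2 hl⟩

/-- The extension of `M` whose elements are the germs of the coordinate functions. -/
def extension : SetModel :=
  ofStructure ((coordinates U).toElementarySubstructure hU.coordinates_tarskiVaught)

/-- The element of the extension named by the variable `k`. -/
def name (k : ℕ) : hU.extension :=
  ⟨coordinate U k, k, rfl⟩

theorem name_surjective : Function.Surjective hU.name := by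
  rintro ⟨_, k, rfl⟩
  exact ⟨k, rfl⟩

theorem countable_extension : Countable hU.extension :=
  hU.name_surjective.countable

theorem name_eq_name {j k : ℕ} : hU.name j = hU.name k ↔ ∀ᶠ v : ℕ → M in U, v j = v k :=
  Subtype.ext_iff.trans Quotient.eq

theorem realize_name {n : ℕ} (φ : LSP.Formula (Fin n)) (k : Fin n → ℕ) :
    hU.extension.Realize φ (fun i => hU.name (k i)) ↔
      ∀ᶠ v : ℕ → M in U, M.Realize φ fun i => v (k i) := by
  have : Nonempty M := (U.nonempty_of_mem univ_mem).elim fun v _ => ⟨v 0⟩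
  let S := (coordinates U).toElementarySubstructure hU.coordinates_tarskiVaught
  refine (realize_ofStructure (X := S) φ _).trans ?_
  refine (S.subtype.map_formula φ _).symm.trans ?_
  exact Ultraproduct.realize_formula_cast φ fun i (v : ℕ → M) => v (k i)

theorem exists_eventually_eq (a : M) : ∃ k, ∀ᶠ v : ℕ → M in U, v k = a :=
  hU.exists_eventually_of_eventually_exists (Q := fun _ x => x = a) (.of_forall fun _ => ⟨a, rfl⟩)

theorem name_mem_name {j k : ℕ} : hU.name j ∈ hU.name k ↔ ∀ᶠ v : ℕ → M in U, v j ∈ v k := by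
  let φ : LSP.Formula (Fin 2) := memSymbol.formula₂ (Term.var 0) (Term.var 1)
  have hφ (N : SetModel) (w : Fin 2 → N) : N.Realize φ w ↔ w 0 ∈ w 1 :=
    realize_memSymbol_formula₂
  exact (hφ _ _).symm.trans ((hU.realize_name φ ![j, k]).trans
    (eventually_congr (.of_forall fun _ => hφ _ _)))

theorem isEEE_extension (hM : SatZFminus M) {k : M → ℕ} (hk : ∀ a, ∀ᶠ v : ℕ → M in U, v (k a) = a) :
    IsEEE M hU.extension fun a => hU.name (k a) where
  elementary n φ p := by
    refine (hU.realize_name φ fun i => k (p i)).trans ?_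
    have h : ∀ᶠ v : ℕ → M in U, (fun i => v (k (p i))) = p :=
      (eventually_all.2 fun i => hk (p i)).mono fun v hv => funext hv
    refine (eventually_congr (h.mono fun v hv => ?_)).trans eventually_const
    rw [hv]
  isEnd a b hba := by
    obtain ⟨j, rfl⟩ := hU.name_surjective b
    have hj : ∀ᶠ v : ℕ → M in U, v j ∈ a :=
      (hU.name_mem_name.1 hba).mp ((hk a).mono fun v hv hj => hv ▸ hj)
    obtain ⟨b, hb⟩ := hU.exists_eventually_eq_of_eventually_mem hj
    exact ⟨b, hU.name_eq_name.2 ((hk b).mp (hb.mono fun v hvb hv => hv.trans hvb.symm))⟩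
  proper h := by
    obtain ⟨a, ha⟩ := h (hU.name 0)
    obtain ⟨s, hs⟩ := hM.exists_upair a a
    obtain ⟨v, hvs, hva, hv⟩ := ((hU.eventually_zero_notMem s).and
      ((hk a).and (hU.name_eq_name.1 ha))).exists
    exact hvs ((hs _).2 (.inl (hv.symm.trans hva)))

theorem eee_extension (hM : SatZFminus M) : EEE M hU.extension := by
  choose k hk using hU.exists_eventually_eq
  exact ⟨_, hU.isEEE_extension hM hk⟩

end IsGeneric
end SetModel

theorem IsElem.not_pred {M N : SetModel} {f : M → N} (hf : IsElem M N f) (h : ∀ x, ¬M.pred x)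
    (y : N) : ¬N.pred y := by
  let φ : LSP.Formula (Fin 0) := ∀' ∼(SetModel.predSymbol.boundedFormula₁ (&0))
  have hφ (K : SetModel) (v : Fin 0 → K) : K.Realize φ v ↔ ∀ x, ¬K.pred x := by
    refine BoundedFormula.realize_all.trans (forall_congr' fun x => ?_)
    rw [BoundedFormula.realize_not, BoundedFormula.realize_rel₁]
    rfl
  exact (hφ N _).1 ((hf 0 φ Fin.elim0).2 ((hφ M _).2 h)) y

universe u in
theorem exists_injective_comp_of_countable_fiber {α β : Type u} [Uncountable α] (f : α → β)
    (hf : ∀ b, (f ⁻¹' {b}).Countable) : ∃ g : α → α, Function.Injective (f ∘ g) := by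
  have hle : #α ≤ #(range f) := not_lt.1 fun hlt => by
    obtain ⟨b, hb⟩ := exists_uncountable_fiber (rangeFactorization f) hlt
    refine not_countable_iff.2 hb (((hf b).mono fun a ha => ?_).to_subtype)
    exact congrArg Subtype.val ha
  obtain ⟨g⟩ := hle
  refine ⟨rangeSplitting f ∘ g, fun a b hab => g.injective (Subtype.ext ?_)⟩
  simpa only [Function.comp_apply, apply_rangeSplitting] using hab

namespace SMIso

variable {M N : SetModel}

theorem nonempty_equiv (h : SMIso M N) : Nonempty (M ≃[LSP] N) := by
  obtain ⟨e, he, he'⟩ := h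
  refine ⟨⟨e, fun f => Empty.elim f, fun {n} r v => ?_⟩⟩
  match n with
  | 0 | _ + 3 => exact Empty.elim r
  | 1 => exact (he' _).symm
  | 2 => exact (he _ _).symm

theorem realizedTypes_eq [Nonempty M] [Nonempty N] (h : SMIso M N) (α : Type*) :
    (∅ : LSP.Theory).realizedTypes M α = (∅ : LSP.Theory).realizedTypes N α := by
  obtain ⟨e⟩ := h.nonempty_equiv
  have he (v : α → M) : (∅ : LSP.Theory).typeOf (e ∘ v) = (∅ : LSP.Theory).typeOf v :=
    SetLike.ext fun φ => by
      simp only [Theory.CompleteType.mem_typeOf, StrongHomClass.realize_formula]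
  have hsurj : Function.Surjective fun v : α → M => e ∘ v := e.surjective.comp_left
  exact (congrArg range (funext he)).symm.trans
    (hsurj.range_comp ((∅ : LSP.Theory).typeOf (M := N)))

end SMIso

theorem exists_pairwise_not_SMIso {I : Type} [Uncountable I] (N : I → SetModel)
    [∀ i, Countable (N i)] (c : ∀ i, N i)
    (hc : ∀ i j, i ≠ j → ∃ φ : LSP.Formula (Fin 1),
      (N i).Realize φ (fun _ => c i) ∧ ¬(N j).Realize φ fun _ => c j) :
    ∃ f : I → I, ∀ i j, i ≠ j → ¬SMIso (N (f i)) (N (f j)) := by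
  have (i : I) : Nonempty (N i) := ⟨c i⟩
  let type (i : I) : (∅ : LSP.Theory).CompleteType (Fin 1) := (∅ : LSP.Theory).typeOf fun _ => c i
  have htype : Function.Injective type := fun i j hij => by
    by_contra hne
    obtain ⟨φ, hi, hj⟩ := hc i j hne
    have hφ : Formula.equivSentence φ ∈ type i := Theory.CompleteType.formula_mem_typeOf.2 hi
    rw [hij] at hφ
    exact hj (Theory.CompleteType.formula_mem_typeOf.1 hφ)
  let types (i : I) : Set ((∅ : LSP.Theory).CompleteType (Fin 1)) :=
    (∅ : LSP.Theory).realizedTypes (N i) (Fin 1)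
  have hfiber (s) : (types ⁻¹' {s}).Countable := by
    obtain h | ⟨i, rfl⟩ := (types ⁻¹' {s}).eq_empty_or_nonempty
    · exact h ▸ countable_empty
    · exact ((countable_range _).preimage_of_injOn htype.injOn).mono
        fun j (hj : types j = types i) => hj.subset (mem_range_self fun _ => c j)
  obtain ⟨f, hf⟩ := exists_injective_comp_of_countable_fiber types hfiber
  exact ⟨f, fun i j hij h => hij (hf (h.realizedTypes_eq (Fin 1)))⟩

theorem countable_model_of_ZF_has_continuum_many_eee_general (M : SetModel) [Countable M]
    (hM : SatZF M) :
    ∃ f : (ℕ → Bool) → SetModel,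
      (∀ g, EEE M (f g)) ∧ ∀ g h : ℕ → Bool, g ≠ h → ¬SMIso (f g) (f h) := by
  obtain ⟨U, hU, hsplit⟩ := hM.exists_isGeneric_separated
  have (g : ℕ → Bool) : Countable (hU g).extension := (hU g).countable_extension
  have hdistinct (g h : ℕ → Bool) (hgh : g ≠ h) : ∃ φ : LSP.Formula (Fin 1),
      (hU g).extension.Realize φ (fun _ => (hU g).name 0) ∧
        ¬(hU h).extension.Realize φ fun _ => (hU h).name 0 := by
    obtain ⟨A, hA, hAg, hAh⟩ := hsplit g h hgh
    obtain ⟨φ, hφ⟩ := hA.exists_formula_empty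
    have hname (g : ℕ → Bool) : (hU g).extension.Realize φ (fun _ => (hU g).name 0) ↔
        ∀ᶠ v : ℕ → M in U g, A (v 0) :=
      ((hU g).realize_name φ fun _ => 0).trans (eventually_congr (.of_forall fun _ => (hφ _).symm))
    exact ⟨φ, (hname g).2 hAg, mt (hname h).1 (Ultrafilter.eventually_not.1 hAh)⟩
  have : Uncountable (ℕ → Bool) := aleph0_lt_mk_iff.1 (by simp [aleph0_lt_continuum])
  obtain ⟨f, hf⟩ := exists_pairwise_not_SMIso (fun g => (hU g).extension) _ hdistinct
  exact ⟨fun g => (hU (f g)).extension, fun g => (hU (f g)).eee_extension hM.toSatZFminus, hf⟩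

/-- Every countable model of ZF has `2^ℵ₀` pairwise
non-isomorphic end elementary extensions. -/
theorem countable_model_of_ZF_has_continuum_many_eee
    (X : Type 1) (E : X → X → Prop) (hc : Countable X)
    (hZF : SatZF ⟨X, E, fun _ => False⟩) :
    ∃ f : (ℕ → Bool) → SetModel,
      (∀ g, (∀ x, ¬(f g).pred x) ∧ EEE ⟨X, E, fun _ => False⟩ (f g)) ∧
      ∀ g h : ℕ → Bool, g ≠ h → ¬SMIso (f g) (f h) := by
  obtain ⟨f, hf, hiso⟩ := countable_model_of_ZF_has_continuum_many_eee_general _ hZF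
  exact ⟨f, fun g => ⟨(hf g).elim fun _ he => he.elementary.not_pred fun _ => id, hf g⟩, hiso⟩
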